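/- Dissipation estimate for horizontal derivatives of σ: Let (σ, u, β) be a sufficiently regular solution of the scaled perturbed Navier–Stokes–Korteweg system on Ω × (0,T) satisfying the Navier boundary conditions and σ|_{∂Ω} = ∂₃²σ|_{∂Ω} = 0. Then for all t ∈ (0,T): ‖σ‖_{1,2} ≲ κ⁻¹(‖∇Δu‖₀ + ‖σ‖_{1,2}‖σ‖₃) + (κ⁻¹ + κ⁻²‖σ‖₂)(‖u_t‖₁ + ‖u‖₂‖∇u‖₁). -/

import Mathlib

open MeasureTheory Set Filter Topology
open scoped ENNReal

noncomputable section

abbrev R3 : Type := Fin 3 → ℝ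

/-- The slab Ω = ℝ² × (0, h). -/
def slab (hh : ℝ) : Set R3 := {x | x 2 ∈ Set.Ioo 0 hh}

/-- The boundary ∂Ω = ℝ² × {0, h}. -/
def bdry (hh : ℝ) : Set R3 := {x | x 2 = 0 ∨ x 2 = hh}

/-- `i`-th standard basis vector of ℝ³. -/
def unitv (i : Fin 3) : R3 := fun j => if j = i then 1 else 0

/-- spatial partial derivative ∂ᵢ -/
def pd (i : Fin 3) (f : R3 → ℝ) : R3 → ℝ := fun x => fderiv ℝ f x (unitv i)

/-- iterated spatial partial derivatives -/
def pdL : List (Fin 3) → (R3 → ℝ) → R3 → ℝ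
  | [], f => f
  | i :: l, f => pd i (pdL l f)

/-- Laplacian -/
def lap (f : R3 → ℝ) : R3 → ℝ := fun x => ∑ i : Fin 3, pd i (pd i f) x

/-- horizontal Laplacian Δ_h -/
def laph (f : R3 → ℝ) : R3 → ℝ := fun x => pd 0 (pd 0 f) x + pd 1 (pd 1 f) x

/-- time derivative -/
def dt (f : ℝ → R3 → ℝ) : ℝ → R3 → ℝ := fun t x => deriv (fun s => f s x) t

/-- `j`-th component of a time dependent vector field -/
def uc (u : ℝ → R3 → Fin 3 → ℝ) (j : Fin 3) : ℝ → R3 → ℝ := fun t x => u t x j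

/-- squared L²(Ω) norm -/
def L2sq (hh : ℝ) (f : R3 → ℝ) : ℝ := ∫ x in slab hh, (f x) ^ 2

/-- squared Hᵏ(Ω) norm -/
def HSq (hh : ℝ) (k : ℕ) (f : R3 → ℝ) : ℝ :=
  ∑ n ∈ Finset.range (k + 1), ∑ α : Fin n → Fin 3, L2sq hh (pdL (List.ofFn α) f)

/-- Hᵏ(Ω) norm -/
def Hnorm (hh : ℝ) (k : ℕ) (f : R3 → ℝ) : ℝ := Real.sqrt (HSq hh k f)

/-- squared Hᵏ(Ω) norm of a vector field -/
def VHSq (hh : ℝ) (k : ℕ) (w : R3 → Fin 3 → ℝ) : ℝ := ∑ j : Fin 3, HSq hh k (fun x => w x j)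

def VHnorm (hh : ℝ) (k : ℕ) (w : R3 → Fin 3 → ℝ) : ℝ := Real.sqrt (VHSq hh k w)

/-- squared ‖∇w‖ₖ² -/
def GradSq (hh : ℝ) (k : ℕ) (w : R3 → Fin 3 → ℝ) : ℝ :=
  ∑ i : Fin 3, ∑ j : Fin 3, HSq hh k (pd i (fun x => w x j))

def GradNorm (hh : ℝ) (k : ℕ) (w : R3 → Fin 3 → ℝ) : ℝ := Real.sqrt (GradSq hh k w)

/-- iterate of a single partial derivative -/
def pdIter (i : Fin 3) : ℕ → (R3 → ℝ) → R3 → ℝ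
  | 0, f => f
  | n + 1, f => pd i (pdIter i n f)

/-- anisotropic norm ‖f‖_{i,l} = ∑_{α₁+α₂=i} ‖∂₁^{α₁}∂₂^{α₂} f‖_{H^l} -/
def anisoNorm (hh : ℝ) (i l : ℕ) (f : R3 → ℝ) : ℝ :=
  ∑ a ∈ Finset.range (i + 1), Hnorm hh l (pdIter 0 a (pdIter 1 (i - a) f))

/-- equilibrium density ρ̄(x) = x₃ + 1 -/
def rbar : R3 → ℝ := fun x => x 2 + 1

/-- perturbed density ρ = ρ̄ + κ⁻¹ σ -/
def rho (κ : ℝ) (σ : R3 → ℝ) : R3 → ℝ := fun x => rbar x + κ⁻¹ * σ x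

/-- The scaled perturbed incompressible NSK system at time `t` on the slab:
    σ_t + u·∇σ + κu₃ = 0,  ρ(u_t + u·∇u) + ∇β = μΔu − Δσ(κe³ + ∇σ),  div u = 0. -/
def NSK (hh μ κ : ℝ) (σ : ℝ → R3 → ℝ) (u : ℝ → R3 → Fin 3 → ℝ) (β : ℝ → R3 → ℝ)
    (t : ℝ) : Prop :=
  ∀ x ∈ slab hh,
    (dt σ t x + (∑ i : Fin 3, u t x i * pd i (σ t) x) + κ * u t x 2 = 0) ∧
    (∀ j : Fin 3,
      rho κ (σ t) x *
          (dt (uc u j) t x + ∑ i : Fin 3, u t x i * pd i (fun y => u t y j) x)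
        + pd j (β t) x
      = μ * lap (fun y => u t y j) x
        - lap (σ t) x * ((if j = 2 then κ else 0) + pd j (σ t) x)) ∧
    (∑ i : Fin 3, pd i (fun y => u t y i) x = 0)

/-- Navier(-slip) boundary conditions at time `t`. -/
def NavierBC (hh : ℝ) (u : ℝ → R3 → Fin 3 → ℝ) (t : ℝ) : Prop :=
  ∀ x ∈ bdry hh,
    u t x 2 = 0 ∧ pd 2 (fun y => u t y 0) x = 0 ∧ pd 2 (fun y => u t y 1) x = 0

/-- "sufficiently regular" time dependent scalar field: jointly smooth with all
    spatial derivatives (and their time derivatives) square integrable on the slab. -/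
def SReg (hh : ℝ) (f : ℝ → R3 → ℝ) : Prop :=
  ContDiff ℝ (⊤ : ℕ∞) (Function.uncurry f) ∧
  ∀ (t : ℝ) (l : List (Fin 3)),
    IntegrableOn (fun x => (pdL l (f t) x) ^ 2) (slab hh) volume ∧
    IntegrableOn (fun x => (pdL l (dt f t) x) ^ 2) (slab hh) volume

/-- "sufficiently regular" time dependent vector field -/
def VReg (hh : ℝ) (u : ℝ → R3 → Fin 3 → ℝ) : Prop := ∀ j : Fin 3, SReg hh (uc u j)

/-- regular (time independent) data with square integrable derivatives -/
def DReg (hh : ℝ) (f : R3 → ℝ) : Prop :=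
  ContDiff ℝ (⊤ : ℕ∞) f ∧ ∀ l : List (Fin 3), IntegrableOn (fun x => (pdL l f x) ^ 2) (slab hh) volume

/-- boundary conditions defining H³_ρ̄ (note ρ̄' = 1) -/
def BCh3 (hh κ : ℝ) (f : R3 → ℝ) : Prop :=
  ∀ x ∈ bdry hh, f x = 0 ∧ pd 2 (pd 2 f) x = 0 ∧ pd 2 f x = -κ

/-- divergence-free and boundary conditions defining ℋ²ₛ -/
def BCh2s (hh : ℝ) (w : R3 → Fin 3 → ℝ) : Prop :=
  (∀ x ∈ slab hh, ∑ i : Fin 3, pd i (fun y => w y i) x = 0) ∧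
  (∀ x ∈ bdry hh, w x 2 = 0 ∧ pd 2 (fun y => w y 0) x = 0 ∧ pd 2 (fun y => w y 1) x = 0)

/-- continuity in time with values in Hᵏ(Ω) -/
def ContH (hh : ℝ) (k : ℕ) (S : Set ℝ) (f : ℝ → R3 → ℝ) : Prop :=
  ∀ t₀ ∈ S,
    Tendsto (fun t => Hnorm hh k (fun x => f t x - f t₀ x)) (nhdsWithin t₀ S) (𝓝 0)

/-- membership in L²(0,T;Hᵏ) -/
def L2H (hh : ℝ) (k : ℕ) (T : ℝ) (f : ℝ → R3 → ℝ) : Prop :=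
  IntegrableOn (fun t => HSq hh k (f t)) (Set.Ioo 0 T) volume

/-- membership in 𝔓_T -/
def memP (hh κ T : ℝ) (σ : ℝ → R3 → ℝ) : Prop :=
  (∀ t ∈ Set.Icc (0:ℝ) T,
    (∀ l : List (Fin 3), l.length ≤ 3 →
      IntegrableOn (fun x => (pdL l (σ t) x) ^ 2) (slab hh) volume) ∧
    BCh3 hh κ (σ t)) ∧
  ContH hh 3 (Set.Icc 0 T) σ ∧ ContH hh 1 (Set.Icc 0 T) (dt σ) ∧ L2H hh 2 T (dt σ)

/-- membership in 𝒱_T -/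
def memV (hh T : ℝ) (u : ℝ → R3 → Fin 3 → ℝ) : Prop :=
  (∀ t ∈ Set.Icc (0:ℝ) T,
    (∀ (j : Fin 3) (l : List (Fin 3)), l.length ≤ 3 →
      IntegrableOn (fun x => (pdL l (fun y => u t y j) x) ^ 2) (slab hh) volume) ∧
    BCh2s hh (u t)) ∧
  (∀ j : Fin 3, ContH hh 2 (Set.Icc 0 T) (uc u j)) ∧
  (∀ j : Fin 3, L2H hh 3 T (uc u j)) ∧
  (∀ j : Fin 3, ContH hh 0 (Set.Icc 0 T) (dt (uc u j))) ∧
  (∀ j : Fin 3, L2H hh 1 T (dt (uc u j)))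

/-- the energy functional E(t) -/
def Efun (hh κ : ℝ) (σ : ℝ → R3 → ℝ) (u : ℝ → R3 → Fin 3 → ℝ) (t : ℝ) : ℝ :=
  HSq hh 3 (σ t) + VHSq hh 2 (u t) + κ ^ 2 * HSq hh 1 (fun x => u t x 2)
    + κ ^ 2 * (L2sq hh (laph (σ t)) + L2sq hh (pd 0 (pd 2 (σ t)))
        + L2sq hh (pd 1 (pd 2 (σ t))))

/-- E⁰, the energy functional evaluated on initial data -/
def E0fun (hh κ : ℝ) (σ0 : R3 → ℝ) (u0 : R3 → Fin 3 → ℝ) : ℝ :=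
  HSq hh 3 σ0 + VHSq hh 2 u0 + κ ^ 2 * HSq hh 1 (fun x => u0 x 2)
    + κ ^ 2 * (L2sq hh (laph σ0) + L2sq hh (pd 0 (pd 2 σ0)) + L2sq hh (pd 1 (pd 2 σ0)))

/-- the functional ℰ(t) -/
def EE (hh κ : ℝ) (σ : ℝ → R3 → ℝ) (u : ℝ → R3 → Fin 3 → ℝ) (t : ℝ) : ℝ :=
  HSq hh 1 (dt σ t) + (∑ j : Fin 3, L2sq hh (dt (uc u j) t)) + Efun hh κ σ u t

/-- the dissipation functional 𝒟(t) -/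
def DD (hh : ℝ) (σ : ℝ → R3 → ℝ) (u : ℝ → R3 → Fin 3 → ℝ) (t : ℝ) : ℝ :=
  (anisoNorm hh 1 2 (σ t)) ^ 2 + HSq hh 2 (dt σ t) + GradSq hh 2 (u t)
    + ∑ j : Fin 3, HSq hh 1 (dt (uc u j) t)

/-- ‖u_t‖ₖ -/
def utNorm (hh : ℝ) (k : ℕ) (u : ℝ → R3 → Fin 3 → ℝ) (t : ℝ) : ℝ :=
  Real.sqrt (∑ j : Fin 3, HSq hh k (dt (uc u j) t))

/-- embedding of the horizontal indices into Fin 3 -/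
def hi (a : Fin 2) : Fin 3 := ⟨a.1, by omega⟩

/-- good initial data: (σ⁰,u⁰) ∈ H³_ρ̄ × ℋ²ₛ, no vacuum, and smallness of E⁰ -/
def GoodData (hh κ d c₁ c₂ : ℝ) (σ0 : R3 → ℝ) (u0 : R3 → Fin 3 → ℝ) : Prop :=
  DReg hh σ0 ∧ (∀ j : Fin 3, DReg hh (fun x => u0 x j)) ∧
  BCh3 hh κ σ0 ∧ BCh2s hh u0 ∧
  (∀ x ∈ slab hh, d ≤ rbar x + κ⁻¹ * σ0 x) ∧
  E0fun hh κ σ0 u0 ≤ ((3 * c₁ * (max κ⁻¹ c₂) ^ 9)⁻¹) ^ 3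

/-- (σ,u,∇β) is a global strong solution with data (σ⁰,u⁰):
    initial condition, equations and boundary conditions for positive times, and
    (σ,u,∇β) ∈ 𝔓_T × 𝒱_T × C⁰([0,T],L²) for every T > 0. -/
def GlobalSol (hh μ κ : ℝ) (σ0 : R3 → ℝ) (u0 : R3 → Fin 3 → ℝ)
    (σ : ℝ → R3 → ℝ) (u : ℝ → R3 → Fin 3 → ℝ) (β : ℝ → R3 → ℝ) : Prop :=
  (∀ x ∈ slab hh, σ 0 x = σ0 x ∧ ∀ j : Fin 3, u 0 x j = u0 x j) ∧
  (∀ t : ℝ, 0 < t → NSK hh μ κ σ u β t ∧ NavierBC hh u t) ∧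
  (∀ T : ℝ, 0 < T → memP hh κ T σ ∧ memV hh T u ∧
    ∀ j : Fin 3, ContH hh 0 (Set.Icc 0 T) (fun t => pd j (β t)))

end

/-!
The curl of the momentum equation annihilates `∇β`, and in the curl of the capillary force
`Δσ(κe³ + ∇σ)` the second derivatives of `σ` cancel. For a horizontal index `j` what is left is
`κ ∂ⱼΔσ = μ(∂ⱼΔu₃ - ∂₃Δuⱼ) + (∂ⱼσ ∂₃Δσ - ∂₃σ ∂ⱼΔσ) + (∂₃(ρaⱼ) - ∂ⱼ(ρa₃))`, where
`a = u_t + u·∇u`. Since `σ` vanishes on the boundary so does `∂ⱼσ`, hence `‖∂ⱼσ‖₂ ≲ ‖Δ∂ⱼσ‖₀` by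
elliptic regularity on the slab. The right-hand side is then estimated with the embeddings
`H¹ ⊂ L⁴` (Gagliardo–Nirenberg–Sobolev) and `H² ⊂ L^∞` (Morrey).
-/

open scoped NNReal

/-! ## Partial derivatives -/

section PartialDerivatives

variable {f g : R3 → ℝ} {i j : Fin 3} {x : R3}

lemma unitv_eq_single (i : Fin 3) : unitv i = Pi.single i (1 : ℝ) := by
  ext j; simp [unitv, Pi.single_apply]

lemma contDiff_pd (hf : ContDiff ℝ (⊤ : ℕ∞) f) (i : Fin 3) : ContDiff ℝ (⊤ : ℕ∞) (pd i f) :=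
  (hf.fderiv_right (by simp)).clm_apply contDiff_const

lemma contDiff_pdL (hf : ContDiff ℝ (⊤ : ℕ∞) f) : ∀ l, ContDiff ℝ (⊤ : ℕ∞) (pdL l f)
  | [] => hf
  | i :: l => contDiff_pd (contDiff_pdL hf l) i

lemma pdL_append (l : List (Fin 3)) (i : Fin 3) (f : R3 → ℝ) :
    pdL (l ++ [i]) f = pdL l (pd i f) := by
  induction l with
  | nil => rfl
  | cons j l ih => simp only [List.cons_append, pdL, ih]

lemma pd_const (i : Fin 3) (c : ℝ) : pd i (fun _ => c) = fun _ => 0 := by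
  funext x; simp [pd]

lemma pd_add (hf : DifferentiableAt ℝ f x) (hg : DifferentiableAt ℝ g x) :
    pd i (fun y => f y + g y) x = pd i f x + pd i g x := by
  simp [pd, fderiv_fun_add hf hg]

lemma pd_sub (hf : DifferentiableAt ℝ f x) (hg : DifferentiableAt ℝ g x) :
    pd i (fun y => f y - g y) x = pd i f x - pd i g x := by
  simp [pd, fderiv_fun_sub hf hg]

lemma pd_mul (hf : DifferentiableAt ℝ f x) (hg : DifferentiableAt ℝ g x) :
    pd i (fun y => f y * g y) x = pd i f x * g x + f x * pd i g x := by
  simp only [pd, fderiv_fun_mul hf hg, add_apply, smul_apply, smul_eq_mul]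
  ring

lemma pd_const_mul (hf : DifferentiableAt ℝ f x) (c : ℝ) :
    pd i (fun y => c * f y) x = c * pd i f x := by
  simp [pd, fderiv_const_mul hf]

lemma pd_sum {ι : Type*} {s : Finset ι} {F : ι → R3 → ℝ}
    (hF : ∀ k ∈ s, DifferentiableAt ℝ (F k) x) :
    pd i (fun y => ∑ k ∈ s, F k y) x = ∑ k ∈ s, pd i (F k) x := by
  simp [pd, fderiv_fun_sum hF]

lemma pd_comm (hf : ContDiff ℝ 2 f) (i j : Fin 3) : pd i (pd j f) = pd j (pd i f) := by
  have second (v w x : R3) :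
      fderiv ℝ (fun y => fderiv ℝ f y v) x w = fderiv ℝ (fderiv ℝ f) x w v := by
    have hdiff : DifferentiableAt ℝ (fderiv ℝ f) x :=
      (hf.fderiv_right (m := 1) (by norm_num)).differentiable (by simp) x
    simp [fderiv_clm_apply hdiff (differentiableAt_const v)]
  funext x
  change fderiv ℝ (fun y => fderiv ℝ f y (unitv j)) x (unitv i)
    = fderiv ℝ (fun y => fderiv ℝ f y (unitv i)) x (unitv j)
  rw [second, second]
  exact hf.contDiffAt.isSymmSndFDerivAt (by simp) _ _

lemma pd_lap (hf : ContDiff ℝ (⊤ : ℕ∞) f) (j : Fin 3) : pd j (lap f) = lap (pd j f) := by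
  have comm {g : R3 → ℝ} (hg : ContDiff ℝ (⊤ : ℕ∞) g) (i : Fin 3) :
      pd j (pd i g) = pd i (pd j g) :=
    pd_comm (hg.of_le (WithTop.coe_le_coe.2 le_top)) j i
  funext x
  calc pd j (lap f) x
      = ∑ i, pd j (pd i (pd i f)) x := pd_sum fun i _ =>
        (contDiff_pd (contDiff_pd hf i) i).differentiable (by simp) x
    _ = lap (pd j f) x := Finset.sum_congr rfl fun i _ => by
        rw [comm (contDiff_pd hf i), comm hf]

lemma fderiv_apply_eq_sum_pd (f : R3 → ℝ) (x v : R3) :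
    fderiv ℝ f x v = ∑ i, v i * pd i f x := by
  have hv : v = ∑ i, v i • unitv i := by ext j; simp [unitv]
  conv_lhs => rw [hv, map_sum]
  simp [pd]

lemma hasDerivAt_comp_update (hf : Differentiable ℝ f) (x : R3) (i : Fin 3) (s : ℝ) :
    HasDerivAt (fun r => f (Function.update x i r)) (pd i f (Function.update x i s)) s := by
  rw [pd, unitv_eq_single]
  exact (hf _).hasFDerivAt.comp_hasDerivAt s (hasDerivAt_update x i s)

lemma pd_eq_zero_of_mem_bdry {h : ℝ} (hf : Differentiable ℝ f) (h0 : ∀ x ∈ bdry h, f x = 0)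
    (hi : i ≠ 2) (hx : x ∈ bdry h) : pd i f x = 0 := by
  have hzero : (fun r => f (Function.update x i r)) = fun _ => 0 :=
    funext fun r => h0 _ (by simpa [bdry, Function.update_of_ne hi.symm] using hx)
  have hderiv := hasDerivAt_comp_update hf x i (x i)
  rw [hzero, Function.update_eq_self] at hderiv
  exact hderiv.unique (hasDerivAt_const _ _)

end PartialDerivatives

/-! ## Square-integrable functions on the slab -/

/-- The factors of Lebesgue measure on the slab, written as a product measure. -/
noncomputable def slabFactor (h : ℝ) (i : Fin 3) : Measure ℝ :=
  if i = 2 then volume.restrict (Ioo 0 h) else volume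

instance (h : ℝ) (i : Fin 3) : SigmaFinite (slabFactor h i) := by
  unfold slabFactor; split_ifs <;> infer_instance

/-- Smooth functions with all derivatives bounded on the slab; multiplication by them preserves
`DReg`. -/
def BReg (h : ℝ) (b : R3 → ℝ) : Prop :=
  ContDiff ℝ (⊤ : ℕ∞) b ∧ ∀ l, ∃ M, ∀ x ∈ slab h, |pdL l b x| ≤ M

section Regularity

variable {h : ℝ} {f g b : R3 → ℝ}

lemma measurableSet_slab (h : ℝ) : MeasurableSet (slab h) :=
  measurableSet_Ioo.preimage (measurable_pi_apply 2)

lemma volume_restrict_slab (h : ℝ) : volume.restrict (slab h) = Measure.pi (slabFactor h) := by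
  have hslab : slab h = univ.pi fun i : Fin 3 => if i = 2 then Ioo 0 h else univ := by
    ext x; simp [slab]
  rw [hslab, volume_pi, Measure.restrict_pi_pi]
  congr 1
  funext i
  unfold slabFactor
  split_ifs <;> simp

lemma pdL_add (hf : ContDiff ℝ (⊤ : ℕ∞) f) (hg : ContDiff ℝ (⊤ : ℕ∞) g) (l : List (Fin 3)) :
    pdL l (fun x => f x + g x) = fun x => pdL l f x + pdL l g x := by
  induction l with
  | nil => rfl
  | cons i l ih =>
    funext x
    rw [pdL, ih, pd_add ((contDiff_pdL hf l).differentiable (by simp) x)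
      ((contDiff_pdL hg l).differentiable (by simp) x)]
    rfl

lemma pdL_const_mul (hf : ContDiff ℝ (⊤ : ℕ∞) f) (c : ℝ) (l : List (Fin 3)) :
    pdL l (fun x => c * f x) = fun x => c * pdL l f x := by
  induction l with
  | nil => rfl
  | cons i l ih =>
    funext x
    rw [pdL, ih, pd_const_mul ((contDiff_pdL hf l).differentiable (by simp) x)]
    rfl

lemma dReg_iff_memLp : DReg h f ↔
    ContDiff ℝ (⊤ : ℕ∞) f ∧ ∀ l, MemLp (pdL l f) 2 (volume.restrict (slab h)) :=
  and_congr_right fun hf => forall_congr' fun l =>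
    (memLp_two_iff_integrable_sq (contDiff_pdL hf l).continuous.aestronglyMeasurable).symm

protected lemma DReg.memLp (hf : DReg h f) : MemLp f 2 (volume.restrict (slab h)) :=
  (dReg_iff_memLp.1 hf).2 []

protected lemma DReg.differentiable (hf : DReg h f) : Differentiable ℝ f :=
  hf.1.differentiable (by simp)

protected lemma DReg.pd (hf : DReg h f) (i : Fin 3) : DReg h (pd i f) :=
  ⟨contDiff_pd hf.1 i, fun l => by rw [← pdL_append]; exact hf.2 _⟩

protected lemma DReg.pd_comm (hf : DReg h f) (i j : Fin 3) : pd i (pd j f) = pd j (pd i f) :=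
  _root_.pd_comm (hf.1.of_le (WithTop.coe_le_coe.2 le_top)) i j

protected lemma DReg.add (hf : DReg h f) (hg : DReg h g) : DReg h fun x => f x + g x := by
  refine dReg_iff_memLp.2 ⟨hf.1.add hg.1, fun l => ?_⟩
  rw [pdL_add hf.1 hg.1]
  exact ((dReg_iff_memLp.1 hf).2 l).add ((dReg_iff_memLp.1 hg).2 l)

protected lemma DReg.sum {ι : Type*} {s : Finset ι} {F : ι → R3 → ℝ} (hs : s.Nonempty)
    (hF : ∀ k ∈ s, DReg h (F k)) : DReg h fun x => ∑ k ∈ s, F k x := by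
  induction hs using Finset.Nonempty.cons_induction with
  | singleton k => simpa using hF k
  | cons k s hk _ ih =>
    simp only [Finset.sum_cons]
    exact (hF k (by simp)).add (ih fun l hl => hF l (by simp [hl]))

protected lemma DReg.lap (hf : DReg h f) : DReg h (lap f) :=
  DReg.sum Finset.univ_nonempty fun i _ => (hf.pd i).pd i

protected lemma SReg.dReg {F : ℝ → R3 → ℝ} (hF : SReg h F) (t : ℝ) : DReg h (F t) :=
  ⟨hF.1.comp (contDiff_const.prodMk contDiff_id : ContDiff ℝ _ fun x : R3 => (t, x)),
    fun l => (hF.2 t l).1⟩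

protected lemma SReg.dReg_dt {F : ℝ → R3 → ℝ} (hF : SReg h F) (t : ℝ) : DReg h (dt F t) := by
  refine ⟨?_, fun l => (hF.2 t l).2⟩
  have hdt : dt F t = fun x => fderiv ℝ (Function.uncurry F) (t, x) (1, 0) := by
    funext x
    exact ((hF.1.differentiable (by simp) (t, x)).hasFDerivAt.comp_hasDerivAt t
      ((hasDerivAt_id t).prodMk (hasDerivAt_const t x))).deriv
  rw [hdt]
  exact ((hF.1.fderiv_right (m := (⊤ : ℕ∞)) (by simp)).comp
    (contDiff_const.prodMk contDiff_id)).clm_apply contDiff_const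

lemma DReg.integrable_mul (hf : DReg h f) (hg : DReg h g) :
    Integrable (fun x => f x * g x) (volume.restrict (slab h)) :=
  hf.memLp.integrable_mul hg.memLp

protected lemma BReg.pd (hb : BReg h b) (i : Fin 3) : BReg h (pd i b) :=
  ⟨contDiff_pd hb.1 i, fun l => by rw [← pdL_append]; exact hb.2 _⟩

protected lemma BReg.add {c : R3 → ℝ} (hb : BReg h b) (hc : BReg h c) :
    BReg h fun x => b x + c x := by
  refine ⟨hb.1.add hc.1, fun l => ?_⟩
  obtain ⟨M, hM⟩ := hb.2 l
  obtain ⟨N, hN⟩ := hc.2 l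
  refine ⟨M + N, fun x hx => ?_⟩
  rw [pdL_add hb.1 hc.1]
  exact (abs_add_le _ _).trans (add_le_add (hM x hx) (hN x hx))

lemma bReg_const (h c : ℝ) : BReg h fun _ => c := by
  have bounded (l : List (Fin 3)) : ∃ M, pdL l (fun _ => c) = fun _ => M := by
    induction l with
    | nil => exact ⟨c, rfl⟩
    | cons i l ih =>
      obtain ⟨M, hM⟩ := ih
      exact ⟨0, by rw [pdL, hM, pd_const]⟩
  refine ⟨contDiff_const, fun l => ?_⟩
  obtain ⟨M, hM⟩ := bounded l
  exact ⟨|M|, fun x _ => by rw [hM]⟩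

lemma pd_coord (i j : Fin 3) : pd i (fun x => x j) = fun _ => if j = i then 1 else 0 := by
  funext x
  change fderiv ℝ (ContinuousLinearMap.proj (R := ℝ) (φ := fun _ : Fin 3 => ℝ) j) x (unitv i) = _
  simp [ContinuousLinearMap.fderiv, unitv]

lemma bReg_coord_two (h : ℝ) : BReg h fun x => x 2 := by
  refine ⟨contDiff_apply ℝ ℝ 2, fun l => ?_⟩
  cases l using List.reverseRecOn with
  | nil =>
    exact ⟨h, fun x hx => (abs_of_pos hx.1).trans_le hx.2.le⟩
  | append_singleton l i =>
    rw [pdL_append, pd_coord]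
    exact (bReg_const h _).2 l

lemma bReg_rbar (h : ℝ) : BReg h rbar := (bReg_coord_two h).add (bReg_const h 1)

lemma BReg.memLp_mul (hb : BReg h b) (hf : MemLp f 2 (volume.restrict (slab h))) :
    MemLp (fun x => b x * f x) 2 (volume.restrict (slab h)) := by
  obtain ⟨M, hM⟩ := hb.2 []
  refine (hf.const_mul M).mono (hb.1.continuous.aestronglyMeasurable.mul hf.1)
    ((ae_restrict_iff' (measurableSet_slab h)).2 (ae_of_all _ fun x hx => ?_))
  rw [norm_mul, norm_mul]
  exact mul_le_mul_of_nonneg_right ((hM x hx).trans (le_abs_self M)) (norm_nonneg _)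

lemma dReg_mul_of_pd_closed {P : (R3 → ℝ) → Prop}
    (hsmooth : ∀ b, P b → ContDiff ℝ (⊤ : ℕ∞) b) (hpd : ∀ b, P b → ∀ i, P (pd i b))
    (hmul : ∀ b f, P b → DReg h f → MemLp (fun x => b x * f x) 2 (volume.restrict (slab h)))
    (hb : P b) (hf : DReg h f) : DReg h fun x => b x * f x := by
  refine dReg_iff_memLp.2 ⟨(hsmooth b hb).mul hf.1, fun l => ?_⟩
  induction l using List.reverseRecOn generalizing b f with
  | nil => exact hmul b f hb hf
  | append_singleton l i ih =>
    have hbs := hsmooth b hb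
    have leibniz : pd i (fun x => b x * f x) = fun x => pd i b x * f x + b x * pd i f x :=
      funext fun x => pd_mul (hbs.differentiable (by simp) x) (hf.differentiable x)
    rw [pdL_append, leibniz,
      pdL_add ((contDiff_pd hbs i).mul hf.1) (hbs.mul (contDiff_pd hf.1 i))]
    exact (ih (hpd b hb i) hf).add (ih hb (hf.pd i))

lemma BReg.mul_dReg (hb : BReg h b) (hf : DReg h f) : DReg h fun x => b x * f x :=
  dReg_mul_of_pd_closed (fun _ h => h.1) (fun _ h => h.pd) (fun _ _ hb hf => hb.memLp_mul hf.memLp)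
    hb hf

end Regularity

/-! ## Sobolev norms -/

section SobolevNorms

variable {h : ℝ} {k : ℕ} {f g : R3 → ℝ}

lemma L2sq_nonneg (h : ℝ) (f : R3 → ℝ) : 0 ≤ L2sq h f := integral_nonneg fun _ => sq_nonneg _

lemma HSq_nonneg (h : ℝ) (k : ℕ) (f : R3 → ℝ) : 0 ≤ HSq h k f :=
  Finset.sum_nonneg fun _ _ => Finset.sum_nonneg fun _ _ => L2sq_nonneg _ _

lemma HSq_zero (h : ℝ) (f : R3 → ℝ) : HSq h 0 f = L2sq h f := by simp [HSq, pdL]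

lemma HSq_succ (h : ℝ) (k : ℕ) (f : R3 → ℝ) :
    HSq h (k + 1) f = L2sq h f + ∑ i, HSq h k (pd i f) := by
  have snoc (n : ℕ) : ∑ α : Fin (n + 1) → Fin 3, L2sq h (pdL (List.ofFn α) f)
      = ∑ i, ∑ α : Fin n → Fin 3, L2sq h (pdL (List.ofFn α) (pd i f)) := by
    rw [← (Fin.snocEquiv fun _ : Fin (n + 1) => Fin 3).sum_comp, Fintype.sum_prod_type]
    simp only [Fin.snocEquiv, Equiv.coe_fn_mk, List.ofFn_succ', Fin.snoc_castSucc, Fin.snoc_last,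
      List.concat_eq_append, pdL_append]
  unfold HSq
  rw [Finset.sum_range_succ', add_comm, Finset.sum_comm]
  simp only [snoc]
  simp [pdL]

lemma HSq_one (h : ℝ) (f : R3 → ℝ) : HSq h 1 f = L2sq h f + ∑ i, L2sq h (pd i f) := by
  simp only [HSq_succ, HSq_zero]

lemma HSq_two (h : ℝ) (f : R3 → ℝ) :
    HSq h 2 f = L2sq h f + ∑ i, L2sq h (pd i f) + ∑ i, ∑ j, L2sq h (pd j (pd i f)) := by
  simp only [HSq_succ h 1, HSq_one, Finset.sum_add_distrib, add_assoc]

lemma Hnorm_nonneg (h : ℝ) (k : ℕ) (f : R3 → ℝ) : 0 ≤ Hnorm h k f := Real.sqrt_nonneg _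

lemma Hnorm_sq (h : ℝ) (k : ℕ) (f : R3 → ℝ) : Hnorm h k f ^ 2 = HSq h k f :=
  Real.sq_sqrt (HSq_nonneg h k f)

lemma Hnorm_zero_sq (h : ℝ) (f : R3 → ℝ) : Hnorm h 0 f ^ 2 = L2sq h f := by
  rw [Hnorm_sq, HSq_zero]

lemma Hnorm_pd_le (h : ℝ) (k : ℕ) (f : R3 → ℝ) (i : Fin 3) :
    Hnorm h k (pd i f) ≤ Hnorm h (k + 1) f := by
  refine Real.sqrt_le_sqrt ?_
  rw [HSq_succ]
  exact (Finset.single_le_sum (f := fun i => HSq h k (pd i f)) (fun _ _ => HSq_nonneg _ _ _)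
    (Finset.mem_univ i)).trans (le_add_of_nonneg_left (L2sq_nonneg h f))

lemma Hnorm_mono {m : ℕ} (hkm : k ≤ m) (f : R3 → ℝ) : Hnorm h k f ≤ Hnorm h m f :=
  Real.sqrt_le_sqrt <| Finset.sum_le_sum_of_subset_of_nonneg
    (Finset.range_subset_range.2 (by lia)) fun _ _ _ =>
      Finset.sum_nonneg fun _ _ => L2sq_nonneg _ _

lemma Hnorm_one_le_sum (h : ℝ) (f : R3 → ℝ) :
    Hnorm h 1 f ≤ Hnorm h 0 f + ∑ i, Hnorm h 0 (pd i f) := by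
  have hsum : 0 ≤ ∑ i, Hnorm h 0 (pd i f) := Finset.sum_nonneg fun i _ => Hnorm_nonneg _ _ _
  have hsq : ∑ i, L2sq h (pd i f) ≤ (∑ i, Hnorm h 0 (pd i f)) ^ 2 := by
    simp only [← Hnorm_zero_sq]
    exact Finset.sum_sq_le_sq_sum_of_nonneg fun i _ => Hnorm_nonneg _ _ _
  refine Real.sqrt_le_iff.2 ⟨add_nonneg (Hnorm_nonneg _ _ _) hsum, ?_⟩
  rw [HSq_one, ← Hnorm_zero_sq]
  nlinarith [mul_nonneg (Hnorm_nonneg h 0 f) hsum]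

lemma Hnorm_zero_eq_lpNorm (hf : AEStronglyMeasurable f (volume.restrict (slab h))) :
    Hnorm h 0 f = lpNorm f 2 (volume.restrict (slab h)) := by
  rw [lpNorm_eq_integral_norm_rpow_toReal two_ne_zero ENNReal.ofNat_ne_top hf, Hnorm, HSq_zero,
    L2sq, Real.sqrt_eq_rpow]
  simp

lemma Hnorm_zero_add_le (hf : MemLp f 2 (volume.restrict (slab h)))
    (hg : MemLp g 2 (volume.restrict (slab h))) :
    Hnorm h 0 (fun x => f x + g x) ≤ Hnorm h 0 f + Hnorm h 0 g := by
  rw [Hnorm_zero_eq_lpNorm (f := fun x => f x + g x) (hf.add hg).1, Hnorm_zero_eq_lpNorm hf.1,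
    Hnorm_zero_eq_lpNorm hg.1]
  exact lpNorm_add_le hf one_le_two

lemma Hnorm_zero_sub_le (hf : MemLp f 2 (volume.restrict (slab h)))
    (hg : MemLp g 2 (volume.restrict (slab h))) :
    Hnorm h 0 (fun x => f x - g x) ≤ Hnorm h 0 f + Hnorm h 0 g := by
  rw [Hnorm_zero_eq_lpNorm (f := fun x => f x - g x) (hf.sub hg).1, Hnorm_zero_eq_lpNorm hf.1,
    Hnorm_zero_eq_lpNorm hg.1]
  exact lpNorm_sub_le hf one_le_two

lemma Hnorm_zero_const_mul (c : ℝ) (f : R3 → ℝ) :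
    Hnorm h 0 (fun x => c * f x) = |c| * Hnorm h 0 f := by
  simp only [Hnorm, HSq_zero, L2sq, mul_pow, integral_const_mul]
  rw [Real.sqrt_mul (sq_nonneg c), Real.sqrt_sq_eq_abs]

lemma Hnorm_const_mul (hf : ContDiff ℝ (⊤ : ℕ∞) f) (c : ℝ) (k : ℕ) :
    Hnorm h k (fun x => c * f x) = |c| * Hnorm h k f := by
  simp only [Hnorm, HSq, pdL_const_mul hf, L2sq, mul_pow, integral_const_mul, ← Finset.mul_sum]
  rw [Real.sqrt_mul (sq_nonneg c), Real.sqrt_sq_eq_abs]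

lemma Hnorm_zero_abs (h : ℝ) (f : R3 → ℝ) : Hnorm h 0 (fun x => |f x|) = Hnorm h 0 f := by
  simp only [Hnorm, HSq_zero, L2sq, sq_abs]

lemma Hnorm_zero_sum_le {ι : Type*} {s : Finset ι} {F : ι → R3 → ℝ}
    (hF : ∀ i ∈ s, MemLp (F i) 2 (volume.restrict (slab h))) :
    Hnorm h 0 (fun x => ∑ i ∈ s, F i x) ≤ ∑ i ∈ s, Hnorm h 0 (F i) := by
  rw [Hnorm_zero_eq_lpNorm (memLp_finsetSum s hF).1,
    Finset.sum_congr rfl fun i hi => Hnorm_zero_eq_lpNorm (hF i hi).1, ← Finset.sum_fn]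
  exact lpNorm_sum_le hF one_le_two

lemma Hnorm_zero_congr (hfg : ∀ x ∈ slab h, f x = g x) : Hnorm h 0 f = Hnorm h 0 g := by
  simp only [Hnorm, HSq_zero, L2sq]
  congr 1
  exact setIntegral_congr_fun (measurableSet_slab h) fun x hx => by simp only [hfg x hx]

lemma Hnorm_zero_mul_le {b : R3 → ℝ} {M : ℝ} (hb : ∀ x ∈ slab h, |b x| ≤ M)
    (hf : MemLp f 2 (volume.restrict (slab h))) (hM : 0 ≤ M) :
    Hnorm h 0 (fun x => b x * f x) ≤ M * Hnorm h 0 f := by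
  refine Real.sqrt_le_iff.2 ⟨mul_nonneg hM (Hnorm_nonneg _ _ _), ?_⟩
  rw [mul_pow, Hnorm_zero_sq, HSq_zero, L2sq, L2sq, ← integral_const_mul]
  refine integral_mono_of_nonneg (ae_of_all _ fun x => sq_nonneg _) (hf.integrable_sq.const_mul _)
    ((ae_restrict_iff' (measurableSet_slab h)).2 (ae_of_all _ fun x hx => ?_))
  simp only [mul_pow]
  exact mul_le_mul_of_nonneg_right (sq_le_sq' (neg_le_of_abs_le (hb x hx))
    (le_of_abs_le (hb x hx))) (sq_nonneg _)

lemma Hnorm_add_le (hf : DReg h f) (hg : DReg h g) (k : ℕ) :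
    Hnorm h k (fun x => f x + g x) ≤ Hnorm h k f + Hnorm h k g := by
  have hsq (u : R3 → ℝ) : HSq h k u = ∑ p ∈ (Finset.range (k + 1)).sigma
      fun n => (Finset.univ : Finset (Fin n → Fin 3)), Hnorm h 0 (pdL (List.ofFn p.2) u) ^ 2 := by
    simp only [HSq, Hnorm_zero_sq, Finset.sum_sigma]
  have minkowski {ι : Type} (s : Finset ι) (a b : ι → ℝ) :
      √(∑ p ∈ s, (a p + b p) ^ 2) ≤ √(∑ p ∈ s, a p ^ 2) + √(∑ p ∈ s, b p ^ 2) := by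
    simpa [Real.sqrt_eq_rpow] using Real.Lp_add_le s a b one_le_two
  unfold Hnorm
  rw [hsq f, hsq g]
  refine (Real.sqrt_le_sqrt ?_).trans (minkowski _ _ _)
  rw [hsq]
  refine Finset.sum_le_sum fun p _ => pow_le_pow_left₀ (Hnorm_nonneg _ _ _) ?_ 2
  rw [pdL_add hf.1 hg.1]
  exact Hnorm_zero_add_le ((dReg_iff_memLp.1 hf).2 _) ((dReg_iff_memLp.1 hg).2 _)

lemma Hnorm_sum_le {ι : Type*} {s : Finset ι} (hs : s.Nonempty) {F : ι → R3 → ℝ}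
    (hF : ∀ i ∈ s, DReg h (F i)) (k : ℕ) :
    Hnorm h k (fun x => ∑ i ∈ s, F i x) ≤ ∑ i ∈ s, Hnorm h k (F i) := by
  induction hs using Finset.Nonempty.cons_induction with
  | singleton i => simp
  | cons i s hi hs ih =>
    have hFs : ∀ j ∈ s, DReg h (F j) := fun j hj => hF j (by simp [hj])
    simp only [Finset.sum_cons]
    exact (Hnorm_add_le (hF i (by simp)) (DReg.sum hs hFs) k).trans
      (by gcongr; exact ih hFs)

lemma Hnorm_lap_le (hf : DReg h f) (k : ℕ) : Hnorm h k (lap f) ≤ 3 * Hnorm h (k + 2) f := by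
  calc Hnorm h k (lap f) ≤ ∑ i, Hnorm h k (pd i (pd i f)) :=
        Hnorm_sum_le Finset.univ_nonempty (fun i _ => (hf.pd i).pd i) k
    _ ≤ ∑ _i : Fin 3, Hnorm h (k + 2) f := Finset.sum_le_sum fun i _ =>
        (Hnorm_pd_le h k _ i).trans (Hnorm_pd_le h (k + 1) f i)
    _ = 3 * Hnorm h (k + 2) f := by simp

end SobolevNorms

/-! ## Integration by parts and the Dirichlet problem -/

lemma integral_pi_eq_zero_of_update {n : ℕ} (μ : Fin (n + 1) → Measure ℝ) [∀ i, SigmaFinite (μ i)]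
    (i : Fin (n + 1)) {F G : (Fin (n + 1) → ℝ) → ℝ} (hF : Integrable F (Measure.pi μ))
    (hG : Integrable G (Measure.pi μ))
    (hslice : ∀ x, Integrable (fun t => F (Function.update x i t)) (μ i) →
      Integrable (fun t => G (Function.update x i t)) (μ i) →
      ∫ t, G (Function.update x i t) ∂μ i = 0) :
    ∫ x, G x ∂Measure.pi μ = 0 := by
  have split := (measurePreserving_piFinSuccAbove μ i).symm
  have update_eq (t : ℝ) (y : Fin n → ℝ) :
      (MeasurableEquiv.piFinSuccAbove (fun _ => ℝ) i).symm (t, y)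
        = Function.update (i.insertNth (α := fun _ => ℝ) 0 y) i t := by
    simp [MeasurableEquiv.piFinSuccAbove, Fin.insertNthEquiv]
  have hFs := split.integrable_comp_of_integrable hF
  have hGs := split.integrable_comp_of_integrable hG
  rw [← split.integral_comp']
  refine (integral_prod_symm _ hGs).trans (integral_eq_zero_of_ae ?_)
  filter_upwards [hFs.prod_left_ae, hGs.prod_left_ae] with y hFy hGy
  simp only [Function.comp_def, update_eq] at hFy hGy
  simpa only [Function.comp_def, update_eq, Pi.zero_apply] using hslice _ hFy hGy

section DirichletProblem

variable {h : ℝ} {f g w : R3 → ℝ}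

lemma integral_slab_pd_eq_zero (hh : 0 < h) (hf : ContDiff ℝ 1 f) (i : Fin 3)
    (hfint : IntegrableOn f (slab h)) (hpd : IntegrableOn (pd i f) (slab h))
    (hb : i = 2 → ∀ x ∈ bdry h, f x = 0) : ∫ x in slab h, pd i f x = 0 := by
  have hderiv (x : R3) (t : ℝ) := hasDerivAt_comp_update (hf.differentiable (by simp)) x i t
  have hcont : Continuous (pd i f) :=
    ((hf.fderiv_right (m := 0) (by simp)).clm_apply contDiff_const).continuous
  rw [IntegrableOn, volume_restrict_slab] at hfint hpd
  rw [volume_restrict_slab]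
  refine integral_pi_eq_zero_of_update _ i hfint hpd fun x hFx hGx => ?_
  by_cases hi : i = 2
  · subst hi
    simp only [slabFactor, if_true]
    rw [← integral_Ioc_eq_integral_Ioo, ← intervalIntegral.integral_of_le hh.le,
      intervalIntegral.integral_eq_sub_of_hasDerivAt (fun t _ => hderiv x t)
        ((hcont.comp (continuous_const.update 2 continuous_id)).intervalIntegrable _ _),
      hb rfl _ (by simp [bdry]), hb rfl _ (by simp [bdry]), sub_self]
  · simp only [slabFactor, hi, if_false] at hFx hGx ⊢
    exact integral_eq_zero_of_hasDerivAt_of_integrable (hderiv x) hGx hFx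

lemma integral_slab_mul_pd (hh : 0 < h) (hf : DReg h f) (hg : DReg h g) (i : Fin 3)
    (hb : i = 2 → ∀ x ∈ bdry h, f x = 0) :
    ∫ x in slab h, f x * pd i g x = -∫ x in slab h, pd i f x * g x := by
  have leibniz : pd i (fun x => f x * g x) = fun x => pd i f x * g x + f x * pd i g x :=
    funext fun x => pd_mul (hf.differentiable x) (hg.differentiable x)
  have hl := (hf.pd i).integrable_mul hg
  have hr := hf.integrable_mul (hg.pd i)
  have hzero := integral_slab_pd_eq_zero hh ((hf.1.mul hg.1).of_le (by simp)) i
    (hf.integrable_mul hg) (by rw [leibniz]; exact hl.add hr) fun hi x hx => by simp [hb hi x hx]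
  rw [leibniz, integral_add hl hr] at hzero
  linarith

lemma L2sq_le_L2sq_pd_two (hh : 0 < h) (hw : DReg h w) (hb : ∀ x ∈ bdry h, w x = 0) :
    L2sq h w ≤ 4 * h ^ 2 * L2sq h (pd 2 w) := by
  have hxw : DReg h fun x => x 2 * w x := (bReg_coord_two h).mul_dReg hw
  have pd_xw : pd 2 (fun x => x 2 * w x) = fun x => w x + x 2 * pd 2 w x := by
    funext x
    rw [pd_mul (differentiableAt_apply 2 x) (hw.differentiable x), pd_coord]
    simp
  have hxpd := ((bReg_coord_two h).mul_dReg (hw.pd 2)).integrable_mul hw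
  have hparts : ∫ x in slab h, x 2 * pd 2 w x * w x = -(1 / 2) * L2sq h w := by
    have hibp := integral_slab_mul_pd hh hw hxw 2 fun _ => hb
    rw [pd_xw] at hibp
    have hl : ∫ x in slab h, w x * (w x + x 2 * pd 2 w x)
        = L2sq h w + ∫ x in slab h, x 2 * pd 2 w x * w x := by
      rw [L2sq, ← integral_add hw.memLp.integrable_sq hxpd]
      exact integral_congr_ae (ae_of_all _ fun x => by ring)
    have hr : ∫ x in slab h, pd 2 w x * (x 2 * w x) = ∫ x in slab h, x 2 * pd 2 w x * w x :=
      integral_congr_ae (ae_of_all _ fun x => by ring)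
    linarith
  -- expand `0 ≤ (w + 2 x₃ ∂₃w)²` and use `x₃² ≤ h²`
  have hsq : ∫ x in slab h, (-4) * (x 2 * pd 2 w x * w x)
      ≤ ∫ x in slab h, (w x ^ 2 + 4 * h ^ 2 * pd 2 w x ^ 2) := by
    refine setIntegral_mono_on (hxpd.const_mul _)
      (hw.memLp.integrable_sq.add ((hw.pd 2).memLp.integrable_sq.const_mul _))
      (measurableSet_slab h) fun x hx => ?_
    have hx2 : x 2 ^ 2 ≤ h ^ 2 := pow_le_pow_left₀ hx.1.le hx.2.le 2
    nlinarith [sq_nonneg (w x + 2 * (x 2 * pd 2 w x)),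
      mul_le_mul_of_nonneg_right hx2 (sq_nonneg (pd 2 w x))]
  rw [integral_const_mul, hparts, integral_add hw.memLp.integrable_sq
    ((hw.pd 2).memLp.integrable_sq.const_mul _), integral_const_mul] at hsq
  change _ ≤ L2sq h w + 4 * h ^ 2 * L2sq h (pd 2 w) at hsq
  linarith

lemma sum_L2sq_pd_le_L2sq_lap (hh : 0 < h) (hw : DReg h w) (hb : ∀ x ∈ bdry h, w x = 0) :
    ∑ i, L2sq h (pd i w) ≤ 4 * h ^ 2 * L2sq h (lap w) := by
  have hparts : ∑ i, L2sq h (pd i w) = -∫ x in slab h, w x * lap w x := by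
    simp only [lap, Finset.mul_sum]
    rw [integral_finsetSum _ fun i _ => hw.integrable_mul ((hw.pd i).pd i),
      ← Finset.sum_neg_distrib]
    refine Finset.sum_congr rfl fun i _ => ?_
    rw [integral_slab_mul_pd hh hw (hw.pd i) i fun _ => hb, neg_neg]
    exact integral_congr_ae (ae_of_all _ fun x => sq (pd i w x))
  have hyoung : ∫ x in slab h, (-8 * h ^ 2) * (w x * lap w x)
      ≤ ∫ x in slab h, (w x ^ 2 + 16 * h ^ 4 * lap w x ^ 2) := by
    refine integral_mono ((hw.integrable_mul hw.lap).const_mul _)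
      (hw.memLp.integrable_sq.add (hw.lap.memLp.integrable_sq.const_mul _)) fun x => ?_
    nlinarith [sq_nonneg (w x + 4 * h ^ 2 * lap w x)]
  rw [integral_const_mul, integral_add hw.memLp.integrable_sq
    (hw.lap.memLp.integrable_sq.const_mul _), integral_const_mul] at hyoung
  change _ ≤ L2sq h w + 16 * h ^ 4 * L2sq h (lap w) at hyoung
  have hpoincare : L2sq h w ≤ 4 * h ^ 2 * ∑ i, L2sq h (pd i w) :=
    (L2sq_le_L2sq_pd_two hh hw hb).trans (by
      gcongr
      exact Finset.single_le_sum (f := fun i => L2sq h (pd i w))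
        (fun i _ => L2sq_nonneg _ _) (Finset.mem_univ 2))
  have h2 : 0 < 4 * h ^ 2 := by positivity
  refine le_of_mul_le_mul_left ?_ h2
  linear_combination hyoung + hpoincare + 8 * h ^ 2 * hparts

lemma integral_pd_pd_mul_pd_pd (hh : 0 < h) (hw : DReg h w) (hb : ∀ x ∈ bdry h, w x = 0)
    (i j : Fin 3) :
    ∫ x in slab h, pd i (pd i w) x * pd j (pd j w) x = L2sq h (pd j (pd i w)) := by
  have of_ne_two {i j : Fin 3} (hi : i ≠ 2) :
      ∫ x in slab h, pd j (pd j w) x * pd i (pd i w) x = L2sq h (pd j (pd i w)) := by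
    have move_i := integral_slab_mul_pd hh ((hw.pd j).pd j) (hw.pd i) i fun h => absurd h hi
    have move_j := integral_slab_mul_pd hh (hw.pd i) ((hw.pd i).pd j) j fun _ x hx =>
      pd_eq_zero_of_mem_bdry hw.differentiable hb hi hx
    have commute : pd i (pd j (pd j w)) = pd j (pd j (pd i w)) := by
      rw [(hw.pd j).pd_comm i j, hw.pd_comm i j]
    rw [move_i, commute, neg_eq_iff_eq_neg]
    simpa only [L2sq, sq, mul_comm] using move_j
  rcases eq_or_ne i 2 with rfl | hi
  · rcases eq_or_ne j 2 with rfl | hj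
    · exact integral_congr_ae (ae_of_all _ fun x => (sq _).symm)
    · rw [of_ne_two hj, hw.pd_comm]
  · simpa only [mul_comm] using of_ne_two hi

lemma sum_L2sq_pd_pd_eq_L2sq_lap (hh : 0 < h) (hw : DReg h w) (hb : ∀ x ∈ bdry h, w x = 0) :
    ∑ i, ∑ j, L2sq h (pd j (pd i w)) = L2sq h (lap w) := by
  have hint (i j : Fin 3) := ((hw.pd i).pd i).integrable_mul ((hw.pd j).pd j)
  simp only [← integral_pd_pd_mul_pd_pd hh hw hb]
  simp only [L2sq, lap, sq, Finset.sum_mul_sum]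
  rw [integral_finsetSum _ fun i _ => integrable_finsetSum _ fun j _ => hint i j]
  exact Finset.sum_congr rfl fun i _ => (integral_finsetSum _ fun j _ => hint i j).symm

lemma Hnorm_two_le_Hnorm_zero_lap (hh : 0 < h) (hw : DReg h w) (hb : ∀ x ∈ bdry h, w x = 0) :
    Hnorm h 2 w ≤ (4 * h ^ 2 + 2 * h + 1) * Hnorm h 0 (lap w) := by
  have hvalue := L2sq_le_L2sq_pd_two hh hw hb
  have hgrad := sum_L2sq_pd_le_L2sq_lap hh hw hb
  have hhess := sum_L2sq_pd_pd_eq_L2sq_lap hh hw hb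
  have hsingle : L2sq h (pd 2 w) ≤ ∑ i, L2sq h (pd i w) :=
    Finset.single_le_sum (f := fun i => L2sq h (pd i w)) (fun _ _ => L2sq_nonneg _ _)
      (Finset.mem_univ 2)
  refine Real.sqrt_le_iff.2 ⟨mul_nonneg (by positivity) (Hnorm_nonneg _ _ _), ?_⟩
  rw [mul_pow, Hnorm_zero_sq, HSq_two, hhess]
  have hchain : 4 * h ^ 2 * L2sq h (pd 2 w) ≤ 4 * h ^ 2 * (4 * h ^ 2 * L2sq h (lap w)) := by
    gcongr
    exact hsingle.trans hgrad
  calc L2sq h w + ∑ i, L2sq h (pd i w) + L2sq h (lap w)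
      ≤ (16 * h ^ 4 + 4 * h ^ 2 + 1) * L2sq h (lap w) := by linarith
    _ ≤ (4 * h ^ 2 + 2 * h + 1) ^ 2 * L2sq h (lap w) := by
      gcongr
      · exact L2sq_nonneg _ _
      · nlinarith [pow_pos hh 2, pow_pos hh 3]

end DirichletProblem

/-! ## Gagliardo–Nirenberg–Sobolev inequality on the slab -/

lemma enorm_le_lintegral_Ioo {g g' : ℝ → ℝ} (hg : ∀ s, HasDerivAt g (g' s) s)
    (hg' : Continuous g') {p q c : ℝ} (hpq : p < q) (hc : c ∈ Icc p q) :
    ‖g c‖ₑ ≤ ∫⁻ s in Ioo p q, ENNReal.ofReal ((q - p)⁻¹ * |g s| + |g' s|) := by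
  have hcont : Continuous g := continuous_iff_continuousAt.2 fun s => (hg s).continuousAt
  have hderiv : deriv g = g' := funext fun s => (hg s).deriv
  have hC1 : ContDiff ℝ 1 g :=
    contDiff_one_iff_deriv.2 ⟨fun s => (hg s).differentiableAt, by rwa [hderiv]⟩
  have increment {a b : ℝ} (ha : p ≤ a) (hab : a ≤ b) (hb : b ≤ q) :
      ‖g b - g a‖ₑ ≤ ∫⁻ s in Ioo p q, ‖g' s‖ₑ := by
    rw [restrict_Ioo_eq_restrict_Icc, ← hderiv]
    exact (enorm_sub_le_lintegral_deriv_of_contDiffOn_Icc hC1.contDiffOn hab).trans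
      (lintegral_mono_set (Icc_subset_Icc ha hb))
  have oscillation {a b : ℝ} (ha : a ∈ Icc p q) (hb : b ∈ Icc p q) :
      ‖g b - g a‖ₑ ≤ ∫⁻ s in Ioo p q, ‖g' s‖ₑ := by
    rcases le_total a b with hab | hab
    · exact increment ha.1 hab hb.2
    · rw [← neg_sub, enorm_neg]
      exact increment hb.1 hab ha.2
  obtain ⟨s, hs, hsavg⟩ := exists_le_setLAverage (μ := volume) (s := Ioo p q)
    (f := fun s => ‖g s‖ₑ) (by simpa using hpq) (by simp) hcont.enorm.measurable.aemeasurable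
  rw [setLAverage_eq, Real.volume_Ioo, ENNReal.div_eq_inv_mul] at hsavg
  calc ‖g c‖ₑ = ‖g s + (g c - g s)‖ₑ := by rw [add_sub_cancel]
    _ ≤ ‖g s‖ₑ + ‖g c - g s‖ₑ := enorm_add_le _ _
    _ ≤ (ENNReal.ofReal (q - p))⁻¹ * (∫⁻ s in Ioo p q, ‖g s‖ₑ) + ∫⁻ s in Ioo p q, ‖g' s‖ₑ :=
      add_le_add hsavg (oscillation (Ioo_subset_Icc_self hs) hc)
    _ = _ := by
      rw [← lintegral_const_mul _ (by fun_prop), ← lintegral_add_left (by fun_prop)]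
      refine lintegral_congr fun s => ?_
      have hinv : 0 < (q - p)⁻¹ := inv_pos.2 (sub_pos.2 hpq)
      rw [ENNReal.ofReal_add (by positivity) (by positivity), ENNReal.ofReal_mul hinv.le,
        ENNReal.ofReal_inv_of_pos (sub_pos.2 hpq), Real.enorm_eq_ofReal_abs,
        Real.enorm_eq_ofReal_abs]

lemma eLpNorm_le_of_interpolation {α : Type*} [MeasurableSpace α] {μ : Measure α} {f : α → ℝ}
    (hf : AEStronglyMeasurable f μ) {p q s t : ℝ≥0} (hp : p ≠ 0) (hq : q ≠ 0) (hst : s + t = 1)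
    {N : ℝ≥0∞} (hfp : eLpNorm f p μ ≤ N) (hfq : eLpNorm f q μ ≤ N) :
    eLpNorm f (s * p + t * q : ℝ≥0) μ ≤ N := by
  have hr : s * p + t * q ≠ 0 := by
    intro h0
    rw [add_eq_zero, mul_eq_zero_iff_right hp, mul_eq_zero_iff_right hq] at h0
    simp [h0.1, h0.2] at hst
  have le_pow {r : ℝ≥0} (hr : r ≠ 0) (hfr : eLpNorm f r μ ≤ N) :
      ∫⁻ x, ‖f x‖ₑ ^ (r : ℝ) ∂μ ≤ N ^ (r : ℝ) := by
    rw [← eLpNorm_nnreal_pow_eq_lintegral hr]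
    exact ENNReal.rpow_le_rpow hfr r.coe_nonneg
  rw [← ENNReal.rpow_le_rpow_iff (z := ((s * p + t * q : ℝ≥0) : ℝ)) (by positivity),
    eLpNorm_nnreal_pow_eq_lintegral hr]
  calc ∫⁻ x, ‖f x‖ₑ ^ ((s * p + t * q : ℝ≥0) : ℝ) ∂μ
      = ∫⁻ x, (‖f x‖ₑ ^ (p : ℝ)) ^ (s : ℝ) * (‖f x‖ₑ ^ (q : ℝ)) ^ (t : ℝ) ∂μ := by
        refine lintegral_congr fun x => ?_
        rw [← ENNReal.rpow_mul, ← ENNReal.rpow_mul,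
          ← ENNReal.rpow_add_of_nonneg _ _ (by positivity) (by positivity)]
        push_cast
        ring_nf
    _ ≤ (∫⁻ x, ‖f x‖ₑ ^ (p : ℝ) ∂μ) ^ (s : ℝ) * (∫⁻ x, ‖f x‖ₑ ^ (q : ℝ) ∂μ) ^ (t : ℝ) :=
        ENNReal.lintegral_mul_norm_pow_le (hf.enorm.pow_const _) (hf.enorm.pow_const _)
          s.coe_nonneg t.coe_nonneg (by exact_mod_cast hst)
    _ ≤ (N ^ (p : ℝ)) ^ (s : ℝ) * (N ^ (q : ℝ)) ^ (t : ℝ) := by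
        gcongr
        · exact le_pow hp hfp
        · exact le_pow hq hfq
    _ = N ^ ((s * p + t * q : ℝ≥0) : ℝ) := by
        rw [← ENNReal.rpow_mul, ← ENNReal.rpow_mul,
          ← ENNReal.rpow_add_of_nonneg _ _ (by positivity) (by positivity)]
        push_cast
        ring_nf

section GagliardoNirenberg

variable {h : ℝ} {v φ ψ : R3 → ℝ}

lemma enorm_le_lintegral_slabFactor (hh : 0 < h) (hv : ContDiff ℝ 1 v) {x : R3} (hx : x ∈ slab h)
    (i : Fin 3) :
    ‖v x‖ₑ ≤ ∫⁻ t, ENNReal.ofReal (h⁻¹ * |v (Function.update x i t)|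
      + |pd i v (Function.update x i t)|) ∂slabFactor h i := by
  have hderiv := hasDerivAt_comp_update (hv.differentiable (by simp)) x i
  have hcont : Continuous fun t => pd i v (Function.update x i t) :=
    ((hv.fderiv_right (m := 0) (by simp)).clm_apply contDiff_const).continuous.comp
      (continuous_const.update i continuous_id)
  by_cases hi : i = 2
  · subst hi
    simpa [slabFactor] using enorm_le_lintegral_Ioo hderiv hcont hh (Ioo_subset_Icc_self hx)
  · simp only [slabFactor, hi, if_false]
    refine le_trans ?_ (lintegral_mono_set (subset_univ (Ioo (x i) (x i + h)))) |>.trans_eq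
      (by rw [Measure.restrict_univ])
    simpa using enorm_le_lintegral_Ioo hderiv hcont (lt_add_of_pos_right (x i) hh)
      (left_mem_Icc.2 (le_add_of_nonneg_right hh.le))

lemma lintegral_enorm_rpow_le (hh : 0 < h) (hv : ContDiff ℝ 1 v) :
    ∫⁻ x in slab h, ‖v x‖ₑ ^ (3 / 2 : ℝ) ≤
      (∫⁻ x in slab h, ENNReal.ofReal (h⁻¹ * |v x| + ∑ i, |pd i v x|)) ^ (3 / 2 : ℝ) := by
  set F : R3 → ℝ≥0∞ := fun x => ENNReal.ofReal (h⁻¹ * |v x| + ∑ i, |pd i v x|)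
  have hpd (i : Fin 3) : Continuous (pd i v) :=
    ((hv.fderiv_right (m := 0) (by simp)).clm_apply contDiff_const).continuous
  have hF : Measurable F := by
    have := hv.continuous
    fun_prop
  have pointwise : ∀ x ∈ slab h, ‖v x‖ₑ ^ (3 / 2 : ℝ)
      ≤ ∏ i, (∫⁻ t, F (Function.update x i t) ∂slabFactor h i) ^ (1 / 2 : ℝ) := by
    intro x hx
    calc ‖v x‖ₑ ^ (3 / 2 : ℝ) = ∏ _i : Fin 3, ‖v x‖ₑ ^ (1 / 2 : ℝ) := by
          rw [Finset.prod_const, Finset.card_fin, ← ENNReal.rpow_mul_natCast]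
          norm_num
      _ ≤ _ := by
        gcongr with i
        refine (enorm_le_lintegral_slabFactor hh hv hx i).trans (lintegral_mono fun t => ?_)
        exact ENNReal.ofReal_le_ofReal (add_le_add le_rfl (Finset.single_le_sum
          (f := fun i => |pd i v _|) (fun _ _ => abs_nonneg _) (Finset.mem_univ i)))
  refine (setLIntegral_mono' (measurableSet_slab h) pointwise).trans ?_
  rw [volume_restrict_slab]
  have hconj : ((Fintype.card (Fin 3) : ℕ) : ℝ).HolderConjugate (3 / 2) := by
    rw [Real.holderConjugate_iff]; norm_num
  have hexp : (1 / 2 : ℝ) = 1 / (((Fintype.card (Fin 3) : ℕ) : ℝ) - 1) := by norm_num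
  rw [hexp]
  exact lintegral_prod_lintegral_pow_le (slabFactor h) hconj hF

lemma pd_pow (hφ : Differentiable ℝ φ) (i : Fin 3) (m : ℕ) :
    pd i (fun x => φ x ^ (m + 1)) = fun x => (m + 1) * φ x ^ m * pd i φ x := by
  funext x
  simp [pd, fderiv_fun_pow _ (hφ x)]

lemma lintegral_enorm_pow_rpow_le (hh : 0 < h) (hφ : ContDiff ℝ 1 φ) (m : ℕ) :
    ∫⁻ x in slab h, (‖φ x‖ₑ ^ (m + 1)) ^ (3 / 2 : ℝ) ≤ (∫⁻ x in slab h,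
      ‖φ x‖ₑ ^ m * ENNReal.ofReal (h⁻¹ * |φ x| + (m + 1) * ∑ i, |pd i φ x|)) ^ (3 / 2 : ℝ) := by
  have hpow := lintegral_enorm_rpow_le hh (hφ.pow (m + 1))
  simp only [enorm_pow, pd_pow (hφ.differentiable (by simp))] at hpow
  convert hpow using 4 with x
  rw [← enorm_pow, Real.enorm_eq_ofReal_abs, ← ENNReal.ofReal_mul (abs_nonneg _)]
  have hm : |(m : ℝ) + 1| = m + 1 := abs_of_nonneg (by positivity)
  simp only [abs_mul, abs_pow, hm, mul_assoc, ← Finset.mul_sum]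
  congr 1
  ring

lemma memLp_natCast_iff {α : Type*} [MeasurableSpace α] {μ : Measure α} {f : α → ℝ}
    (hf : AEStronglyMeasurable f μ) {n : ℕ} (hn : n ≠ 0) :
    MemLp f n μ ↔ ∫⁻ x, ‖f x‖ₑ ^ n ∂μ < ∞ := by
  rw [MemLp, and_iff_right hf, eLpNorm_lt_top_iff_lintegral_rpow_enorm_lt_top (by simpa)
    (ENNReal.natCast_ne_top n)]
  simp

lemma DReg.memLp_natCast (hh : 0 < h) (hφ : DReg h φ) {n : ℕ} (hn : 2 ≤ n) :
    MemLp φ n (volume.restrict (slab h)) := by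
  induction n, hn using Nat.le_induction generalizing φ with
  | base => exact_mod_cast hφ.memLp
  | succ n hn ih =>
    obtain ⟨m, rfl⟩ : ∃ m, n = m + 1 := ⟨n - 1, by lia⟩
    set G : R3 → ℝ := fun x => h⁻¹ * |φ x| + (m + 1) * ∑ i, |pd i φ x|
    have hG : MemLp G (m + 1 : ℕ) (volume.restrict (slab h)) :=
      ((ih hφ).norm.const_mul _).add
        ((memLp_finsetSum _ fun i _ => (ih (hφ.pd i)).norm).const_mul _)
    have hφn := (memLp_natCast_iff hφ.memLp.1 (by lia)).1 (ih hφ)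
    have hGn := (memLp_natCast_iff hG.1 (by lia)).1 hG
    have young (a b : ℝ≥0∞) : a ^ m * b ≤ a ^ (m + 1) + b ^ (m + 1) := by
      rcases le_total a b with hab | hab
      · exact le_add_left (by rw [pow_succ]; gcongr)
      · exact le_add_right (by rw [pow_succ]; gcongr)
    have hprod : ∫⁻ x in slab h, ‖φ x‖ₑ ^ m * ENNReal.ofReal (G x) < ∞ := by
      refine lt_of_le_of_lt (lintegral_mono fun x => ?_)
        ((lintegral_add_left' (hφ.memLp.1.enorm.pow_const _) _).trans_lt
          (ENNReal.add_lt_top.2 ⟨hφn, hGn⟩))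
      exact (mul_le_mul_right (Real.ofReal_le_enorm _) _).trans (young _ _)
    have hgain := (lintegral_enorm_pow_rpow_le hh (hφ.1.of_le (by simp)) m).trans_lt
      (ENNReal.rpow_lt_top_of_nonneg (by norm_num) hprod.ne)
    have interpolate (a : ℝ≥0∞) :
        a ^ (m + 1 + 1) ≤ a ^ (m + 1) + (a ^ (m + 1)) ^ (3 / 2 : ℝ) := by
      rcases le_total a 1 with ha | ha
      · exact le_add_right (pow_le_pow_right_of_le_one' ha (by lia))
      · refine le_add_left ?_
        rw [← ENNReal.rpow_natCast, ← ENNReal.rpow_natCast, ← ENNReal.rpow_mul]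
        refine ENNReal.rpow_le_rpow_of_exponent_le ha ?_
        have : (2 : ℝ) ≤ (m + 1 : ℕ) := by exact_mod_cast hn
        push_cast at this ⊢
        linarith
    refine (memLp_natCast_iff hφ.memLp.1 (by lia)).2 (lt_of_le_of_lt
      (lintegral_mono fun x => interpolate _) ?_)
    rw [lintegral_add_left' (hφ.memLp.1.enorm.pow_const _)]
    exact ENNReal.add_lt_top.2 ⟨hφn, hgain⟩

lemma lintegral_enorm_pow_three_mul_le {α : Type*} {m : MeasurableSpace α} {μ : Measure α}
    {f g : α → ℝ} (hf : AEStronglyMeasurable f μ) (hg : AEStronglyMeasurable g μ) :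
    ∫⁻ x, ‖f x‖ₑ ^ 3 * ‖g x‖ₑ ∂μ ≤ eLpNorm f 6 μ ^ (3 : ℝ) * eLpNorm g 2 μ := by
  have hf6 : eLpNorm f 6 μ ^ (6 : ℝ) = ∫⁻ x, ‖f x‖ₑ ^ (6 : ℝ) ∂μ :=
    eLpNorm_nnreal_pow_eq_lintegral (p := 6) (by norm_num)
  have hg2 : eLpNorm g 2 μ ^ (2 : ℝ) = ∫⁻ x, ‖g x‖ₑ ^ (2 : ℝ) ∂μ :=
    eLpNorm_nnreal_pow_eq_lintegral (p := 2) (by norm_num)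
  calc ∫⁻ x, ‖f x‖ₑ ^ 3 * ‖g x‖ₑ ∂μ
      = ∫⁻ x, (‖f x‖ₑ ^ (6 : ℝ)) ^ (1 / 2 : ℝ) * (‖g x‖ₑ ^ (2 : ℝ)) ^ (1 / 2 : ℝ) ∂μ := by
        refine lintegral_congr fun x => ?_
        rw [← ENNReal.rpow_mul, ← ENNReal.rpow_mul, ← ENNReal.rpow_natCast]
        norm_num
    _ ≤ (eLpNorm f 6 μ ^ (6 : ℝ)) ^ (1 / 2 : ℝ) * (eLpNorm g 2 μ ^ (2 : ℝ)) ^ (1 / 2 : ℝ) := by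
        rw [hf6, hg2]
        exact ENNReal.lintegral_mul_norm_pow_le (hf.enorm.pow_const _) (hg.enorm.pow_const _)
          (by norm_num) (by norm_num) (by norm_num)
    _ = eLpNorm f 6 μ ^ (3 : ℝ) * eLpNorm g 2 μ := by
        rw [← ENNReal.rpow_mul, ← ENNReal.rpow_mul]
        norm_num

lemma eLpNorm_six_le (hh : 0 < h) (hφ : DReg h φ) :
    eLpNorm φ 6 (volume.restrict (slab h)) ≤
      eLpNorm (fun x => h⁻¹ * |φ x| + 4 * ∑ i, |pd i φ x|) 2 (volume.restrict (slab h)) := by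
  set G : R3 → ℝ := fun x => h⁻¹ * |φ x| + 4 * ∑ i, |pd i φ x|
  set a := eLpNorm φ 6 (volume.restrict (slab h))
  set b := eLpNorm G 2 (volume.restrict (slab h))
  have hG : Continuous G := by
    have := hφ.1.continuous
    have (i : Fin 3) := (hφ.pd i).1.continuous
    fun_prop
  have ha : a ^ (6 : ℝ) = ∫⁻ x in slab h, (‖φ x‖ₑ ^ (3 + 1)) ^ (3 / 2 : ℝ) := by
    refine (eLpNorm_nnreal_pow_eq_lintegral (p := 6) (by norm_num)).trans
      (lintegral_congr fun x => ?_)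
    rw [← ENNReal.rpow_natCast, ← ENNReal.rpow_mul]
    norm_num
  have a_lt_top : a < ∞ := by exact_mod_cast (hφ.memLp_natCast hh (n := 6) (by norm_num)).2
  have holder : ∫⁻ x in slab h, ‖φ x‖ₑ ^ 3 * ENNReal.ofReal (G x) ≤ a ^ (3 : ℝ) * b :=
    (lintegral_mono fun x => mul_le_mul_right (Real.ofReal_le_enorm _) _).trans
      (lintegral_enorm_pow_three_mul_le hφ.memLp.1 hG.aestronglyMeasurable)
  have hgain : a ^ (6 : ℝ) ≤ (a ^ (3 : ℝ) * b) ^ (3 / 2 : ℝ) := by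
    refine ha.trans_le ((lintegral_enorm_pow_rpow_le hh (hφ.1.of_le (by simp)) 3).trans
      (ENNReal.rpow_le_rpow (le_of_eq_of_le ?_ holder) (by norm_num)))
    norm_num [G]
  have cancel : a ^ 3 * a ≤ a ^ 3 * b := by
    rw [← ENNReal.rpow_le_rpow_iff (z := 3 / 2) (by norm_num)]
    convert hgain using 1
    · rw [← pow_succ, ← ENNReal.rpow_natCast, ← ENNReal.rpow_mul]
      norm_num
    · norm_num
  rcases eq_or_ne a 0 with ha0 | ha0
  · exact ha0.trans_le zero_le
  · exact (ENNReal.mul_le_mul_iff_right (pow_ne_zero 3 ha0)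
      (ENNReal.pow_ne_top a_lt_top.ne)).1 cancel

lemma ofReal_Hnorm_zero (hφ : MemLp φ 2 (volume.restrict (slab h))) :
    ENNReal.ofReal (Hnorm h 0 φ) = eLpNorm φ 2 (volume.restrict (slab h)) := by
  rw [Hnorm_zero_eq_lpNorm hφ.1, ofReal_lpNorm hφ]

/-- The constant of the embedding `H¹ ⊂ L⁴`. -/
noncomputable def sobolevConst (h : ℝ) : ℝ := h⁻¹ + 12

lemma sobolevConst_pos (hh : 0 < h) : 0 < sobolevConst h := by unfold sobolevConst; positivity

lemma eLpNorm_six_le_Hnorm_one (hh : 0 < h) (hφ : DReg h φ) :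
    eLpNorm φ 6 (volume.restrict (slab h)) ≤ ENNReal.ofReal (sobolevConst h * Hnorm h 1 φ) := by
  have hval : MemLp (fun x => h⁻¹ * |φ x|) 2 (volume.restrict (slab h)) :=
    hφ.memLp.norm.const_mul _
  have hgrad : MemLp (fun x => ∑ i, |pd i φ x|) 2 (volume.restrict (slab h)) :=
    memLp_finsetSum _ fun i _ => (hφ.pd i).memLp.norm
  have hgrad4 := hgrad.const_mul 4
  have hsum : MemLp (fun x => h⁻¹ * |φ x| + 4 * ∑ i, |pd i φ x|) 2 (volume.restrict (slab h)) :=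
    hval.add hgrad4
  refine (eLpNorm_six_le hh hφ).trans ?_
  rw [← ofReal_Hnorm_zero hsum]
  refine ENNReal.ofReal_le_ofReal ?_
  calc Hnorm h 0 (fun x => h⁻¹ * |φ x| + 4 * ∑ i, |pd i φ x|)
      ≤ h⁻¹ * Hnorm h 0 φ + 4 * Hnorm h 0 (fun x => ∑ i, |pd i φ x|) := by
        refine (Hnorm_zero_add_le hval hgrad4).trans_eq ?_
        rw [Hnorm_zero_const_mul, Hnorm_zero_const_mul, Hnorm_zero_abs, abs_of_pos (inv_pos.2 hh),
          abs_of_pos four_pos]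
    _ ≤ h⁻¹ * Hnorm h 1 φ + 4 * ∑ _i : Fin 3, Hnorm h 1 φ := by
        gcongr
        · exact Hnorm_mono zero_le_one φ
        · refine (Hnorm_zero_sum_le fun i _ => (hφ.pd i).memLp.norm).trans ?_
          exact Finset.sum_le_sum fun i _ => (Hnorm_zero_abs h _).trans_le (Hnorm_pd_le h 0 φ i)
    _ = sobolevConst h * Hnorm h 1 φ := by
        rw [Finset.sum_const, Finset.card_fin, sobolevConst]
        ring

lemma eLpNorm_four_le (hh : 0 < h) (hφ : DReg h φ) :
    eLpNorm φ 4 (volume.restrict (slab h)) ≤ ENNReal.ofReal (sobolevConst h * Hnorm h 1 φ) := by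
  have h2 : eLpNorm φ 2 (volume.restrict (slab h))
      ≤ ENNReal.ofReal (sobolevConst h * Hnorm h 1 φ) := by
    rw [← ofReal_Hnorm_zero hφ.memLp]
    refine ENNReal.ofReal_le_ofReal ((Hnorm_mono zero_le_one φ).trans
      (le_mul_of_one_le_left (Hnorm_nonneg _ _ _) ?_))
    linarith [inv_pos.2 hh, show sobolevConst h = h⁻¹ + 12 from rfl]
  convert eLpNorm_le_of_interpolation hφ.memLp.1 (p := 2) (q := 6) (s := 1 / 2) (t := 1 / 2)
    two_ne_zero (by norm_num) (add_halves 1) h2 (eLpNorm_six_le_Hnorm_one hh hφ)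
  norm_num [← NNReal.coe_inj]

instance : ENNReal.HolderTriple 4 4 2 := ⟨by
  rw [← two_mul, show (4 : ℝ≥0∞) = 2 * 2 by norm_num,
    ENNReal.mul_inv (by simp) (by simp), ← mul_assoc, ENNReal.mul_inv_cancel (by simp) (by simp),
    one_mul]⟩

lemma DReg.memLp_four (hh : 0 < h) (hφ : DReg h φ) : MemLp φ 4 (volume.restrict (slab h)) :=
  hφ.memLp_natCast hh (n := 4) (by norm_num)

protected lemma DReg.mul (hh : 0 < h) (hφ : DReg h φ) (hψ : DReg h ψ) :
    DReg h fun x => φ x * ψ x :=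
  dReg_mul_of_pd_closed (fun _ h => h.1) (fun _ h => h.pd)
    (fun _ _ hφ hψ => (hψ.memLp_four hh).mul' (hφ.memLp_four hh)) hφ hψ

lemma Hnorm_zero_mul_le_Hnorm_one (hh : 0 < h) (hφ : DReg h φ) (hψ : DReg h ψ) :
    Hnorm h 0 (fun x => φ x * ψ x) ≤ sobolevConst h ^ 2 * (Hnorm h 1 φ * Hnorm h 1 ψ) := by
  have hφ1 := mul_nonneg (sobolevConst_pos hh).le (Hnorm_nonneg h 1 φ)
  have hnonneg := mul_nonneg (sq_nonneg (sobolevConst h))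
    (mul_nonneg (Hnorm_nonneg h 1 φ) (Hnorm_nonneg h 1 ψ))
  rw [← ENNReal.ofReal_le_ofReal_iff hnonneg, ofReal_Hnorm_zero (hφ.mul hh hψ).memLp]
  calc eLpNorm (φ • ψ) 2 (volume.restrict (slab h))
      ≤ eLpNorm φ 4 (volume.restrict (slab h)) * eLpNorm ψ 4 (volume.restrict (slab h)) :=
        eLpNorm_smul_le_mul_eLpNorm hψ.memLp.1 hφ.memLp.1
    _ ≤ ENNReal.ofReal (sobolevConst h * Hnorm h 1 φ)
        * ENNReal.ofReal (sobolevConst h * Hnorm h 1 ψ) :=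
        mul_le_mul' (eLpNorm_four_le hh hφ) (eLpNorm_four_le hh hψ)
    _ = ENNReal.ofReal (sobolevConst h ^ 2 * (Hnorm h 1 φ * Hnorm h 1 ψ)) := by
        rw [← ENNReal.ofReal_mul hφ1]
        ring_nf

end GagliardoNirenberg

/-! ## Morrey's inequality on the slab -/

section Morrey

open Module (finrank)

lemma lintegral_Ioo_ofReal_rpow_neg {a : ℝ} (ha : a < 1) :
    ∫⁻ t in Ioo (0 : ℝ) 1, ENNReal.ofReal (t ^ (-a)) = ENNReal.ofReal (1 - a)⁻¹ := by
  have hint : IntervalIntegrable (fun t : ℝ => t ^ (-a)) volume 0 1 :=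
    intervalIntegral.intervalIntegrable_rpow' (by linarith)
  rw [intervalIntegrable_iff_integrableOn_Ioo_of_le zero_le_one] at hint
  rw [← ofReal_integral_eq_lintegral_ofReal hint ((ae_restrict_iff' measurableSet_Ioo).2
      (ae_of_all _ fun t ht => Real.rpow_nonneg ht.1.le _)),
    ← integral_Ioc_eq_integral_Ioo, ← intervalIntegral.integral_of_le zero_le_one,
    integral_rpow (Or.inl (by linarith)), Real.one_rpow, Real.zero_rpow (by linarith),
    neg_add_eq_sub]
  simp

variable {E : Type*} [NormedAddCommGroup E] [NormedSpace ℝ E]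

lemma enorm_le_enorm_add_lintegral_fderiv {f : E → ℝ} (hf : ContDiff ℝ 1 f) (x : E) {v : E}
    {R : ℝ} (hv : ‖v‖ ≤ R) :
    ‖f x‖ₑ ≤ ‖f (x + v)‖ₑ +
      ENNReal.ofReal R * ∫⁻ t in Ioo (0 : ℝ) 1, ‖fderiv ℝ f (x + t • v)‖ₑ := by
  have hline : ContDiff ℝ 1 fun t : ℝ => f (x + t • v) := by fun_prop
  have hderiv (t : ℝ) : deriv (fun t : ℝ => f (x + t • v)) t = fderiv ℝ f (x + t • v) v := by
    have := (hf.differentiable (by simp) (x + t • v)).hasFDerivAt.comp_hasDerivAt t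
      (((hasDerivAt_id t).smul_const v).const_add x)
    simpa [Function.comp_def] using this.deriv
  have hint := enorm_sub_le_lintegral_deriv_of_contDiffOn_Icc hline.contDiffOn zero_le_one
  simp only [one_smul, zero_smul, add_zero, hderiv] at hint
  rw [← restrict_Ioo_eq_restrict_Icc] at hint
  calc ‖f x‖ₑ = ‖f (x + v) - (f (x + v) - f x)‖ₑ := by rw [sub_sub_cancel]
    _ ≤ ‖f (x + v)‖ₑ + ‖f (x + v) - f x‖ₑ := enorm_sub_le
    _ ≤ _ := by
      gcongr
      rw [← lintegral_const_mul' _ _ ENNReal.ofReal_ne_top]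
      refine hint.trans (lintegral_mono fun t => (ContinuousLinearMap.le_opENorm _ _).trans ?_)
      rw [mul_comm]
      gcongr
      rw [← ofReal_norm]
      exact ENNReal.ofReal_le_ofReal hv

variable [FiniteDimensional ℝ E] [MeasurableSpace E] [BorelSpace E] {μ : Measure E}
  [μ.IsAddHaarMeasure]

lemma map_add_smul_restrict_le {S V : Set E} (hS : MeasurableSet S) {x : E} {t : ℝ} (ht : t ≠ 0)
    (hV : ∀ v ∈ V, x + t • v ∈ S) :
    (μ.restrict V).map (fun v => x + t • v)
      ≤ ENNReal.ofReal |(t ^ finrank ℝ E)⁻¹| • μ.restrict S := by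
  have hmeas : Measurable fun v : E => x + t • v := by fun_prop
  calc (μ.restrict V).map (fun v => x + t • v)
      ≤ (μ.restrict ((fun v => x + t • v) ⁻¹' S)).map (fun v => x + t • v) :=
        Measure.map_mono (Measure.restrict_mono hV le_rfl) hmeas
    _ = (((μ.map (t • ·)).map (x + ·))).restrict S := by
        rw [Measure.map_map (measurable_const_add x) (measurable_const_smul t)]
        exact (Measure.restrict_map hmeas hS).symm
    _ = ENNReal.ofReal |(t ^ finrank ℝ E)⁻¹| • μ.restrict S := by
        rw [Measure.map_addHaar_smul μ ht, Measure.map_smul, map_add_left_eq_self,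
          Measure.restrict_smul]

lemma setLIntegral_enorm_comp_add_smul_le {F : Type*} [NormedAddCommGroup F] {g : E → F}
    (hg : Continuous g) {S V : Set E} (hS : MeasurableSet S) {x : E} {t : ℝ} (ht : 0 < t)
    (hV : ∀ v ∈ V, x + t • v ∈ S) {p : ℝ≥0} (hp : 1 ≤ p) :
    ∫⁻ v in V, ‖g (x + t • v)‖ₑ ∂μ ≤
      ENNReal.ofReal (t ^ (-(finrank ℝ E / p : ℝ))) * eLpNorm g p (μ.restrict S)
        * μ V ^ (1 - 1 / p : ℝ) := by
  have hmeas : Measurable fun v : E => x + t • v := by fun_prop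
  have hscale : ENNReal.ofReal |(t ^ finrank ℝ E)⁻¹| ^ (1 / p : ℝ)
      = ENNReal.ofReal (t ^ (-(finrank ℝ E / p : ℝ))) := by
    rw [abs_of_pos (by positivity), ENNReal.ofReal_rpow_of_pos (by positivity),
      ← Real.rpow_natCast, ← Real.rpow_neg ht.le, ← Real.rpow_mul ht.le]
    ring_nf
  have hnorm : eLpNorm (fun v => g (x + t • v)) p (μ.restrict V)
      ≤ ENNReal.ofReal (t ^ (-(finrank ℝ E / p : ℝ))) * eLpNorm g p (μ.restrict S) := by
    rw [← hscale, ← Function.comp_def g,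
      ← eLpNorm_map_measure hg.aestronglyMeasurable hmeas.aemeasurable]
    refine (eLpNorm_mono_measure _ (map_add_smul_restrict_le hS ht.ne' hV)).trans_eq ?_
    rw [eLpNorm_smul_measure_of_ne_top ENNReal.coe_ne_top]
    simp
  calc ∫⁻ v in V, ‖g (x + t • v)‖ₑ ∂μ = eLpNorm (fun v => g (x + t • v)) 1 (μ.restrict V) :=
        eLpNorm_one_eq_lintegral_enorm.symm
    _ ≤ eLpNorm (fun v => g (x + t • v)) p (μ.restrict V) * μ V ^ (1 - 1 / p : ℝ) := by
        simpa [Function.comp_def] using eLpNorm_le_eLpNorm_mul_rpow_measure_univ (p := 1) (q := p)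
          (by exact_mod_cast hp) (μ := μ.restrict V)
          (hg.comp (f := fun v : E => x + t • v) (by fun_prop)).aestronglyMeasurable
    _ ≤ _ := by gcongr

lemma measure_mul_enorm_le_of_starConvex {f : E → ℝ} (hf : ContDiff ℝ 1 f) {S V : Set E}
    (hS : MeasurableSet S) (hV : MeasurableSet V) (hV0 : StarConvex ℝ 0 V) {R : ℝ}
    (hR : ∀ v ∈ V, ‖v‖ ≤ R) {x : E} (hx : ∀ v ∈ V, x + v ∈ S) {p : ℝ≥0} (hp1 : 1 ≤ p)
    (hp : finrank ℝ E < p) :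
    μ V * ‖f x‖ₑ ≤ (eLpNorm f p (μ.restrict S) + ENNReal.ofReal R
      * (ENNReal.ofReal (1 - finrank ℝ E / p : ℝ)⁻¹ * eLpNorm (fderiv ℝ f) p (μ.restrict S)))
        * μ V ^ (1 - 1 / p : ℝ) := by
  have hf' : Continuous (fderiv ℝ f) := hf.continuous_fderiv one_ne_zero
  have hf'line : Measurable fun z : E × ℝ => ‖fderiv ℝ f (x + z.2 • z.1)‖ₑ :=
    (hf'.comp (by fun_prop : Continuous fun z : E × ℝ => x + z.2 • z.1)).enorm.measurable
  have hexp : (finrank ℝ E / p : ℝ) < 1 := by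
    rw [div_lt_one (by positivity)]
    exact_mod_cast hp
  calc μ V * ‖f x‖ₑ = ∫⁻ _v in V, ‖f x‖ₑ ∂μ := by rw [setLIntegral_const, mul_comm]
    _ ≤ ∫⁻ v in V, (‖f (x + v)‖ₑ + ENNReal.ofReal R
          * ∫⁻ t in Ioo (0 : ℝ) 1, ‖fderiv ℝ f (x + t • v)‖ₑ) ∂μ :=
        setLIntegral_mono' hV fun v hv => enorm_le_enorm_add_lintegral_fderiv hf x (hR v hv)
    _ = ∫⁻ v in V, ‖f (x + v)‖ₑ ∂μ + ENNReal.ofReal R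
          * ∫⁻ t in Ioo (0 : ℝ) 1, ∫⁻ v in V, ‖fderiv ℝ f (x + t • v)‖ₑ ∂μ := by
        have hfadd : Continuous fun v => f (x + v) := hf.continuous.comp (continuous_const_add x)
        rw [lintegral_add_left hfadd.enorm.measurable,
          lintegral_const_mul' _ _ ENNReal.ofReal_ne_top,
          lintegral_lintegral_swap hf'line.aemeasurable]
    _ ≤ eLpNorm f p (μ.restrict S) * μ V ^ (1 - 1 / p : ℝ) + ENNReal.ofReal R
          * ∫⁻ t in Ioo (0 : ℝ) 1, ENNReal.ofReal (t ^ (-(finrank ℝ E / p : ℝ)))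
            * eLpNorm (fderiv ℝ f) p (μ.restrict S) * μ V ^ (1 - 1 / p : ℝ) := by
        gcongr ?_ + _ * ?_
        · simpa using setLIntegral_enorm_comp_add_smul_le hf.continuous hS one_pos
            (by simpa using hx) hp1
        · refine setLIntegral_mono' measurableSet_Ioo fun t ht => ?_
          exact setLIntegral_enorm_comp_add_smul_le hf' hS ht.1
            (fun v hv => hx _ (hV0.smul_mem hv ht.1.le ht.2.le)) hp1
    _ = _ := by
        simp only [mul_assoc]
        rw [lintegral_mul_const _ (by fun_prop), lintegral_Ioo_ofReal_rpow_neg hexp]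
        ring

end Morrey

section SupBound

variable {h : ℝ} {φ : R3 → ℝ}

lemma norm_fderiv_le_sum_abs_pd (f : R3 → ℝ) (x : R3) : ‖fderiv ℝ f x‖ ≤ ∑ i, |pd i f x| := by
  refine ContinuousLinearMap.opNorm_le_bound _
    (Finset.sum_nonneg fun _ _ => abs_nonneg _) fun v => ?_
  rw [fderiv_apply_eq_sum_pd, Finset.sum_mul]
  refine (Finset.abs_sum_le_sum_abs _ _).trans (Finset.sum_le_sum fun i _ => ?_)
  rw [abs_mul, mul_comm]
  exact mul_le_mul_of_nonneg_left (norm_le_pi_norm v i) (abs_nonneg _)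

lemma eLpNorm_four_fderiv_le (hh : 0 < h) (hφ : DReg h φ) :
    eLpNorm (fderiv ℝ φ) 4 (volume.restrict (slab h))
      ≤ ENNReal.ofReal (3 * (sobolevConst h * Hnorm h 2 φ)) := by
  calc eLpNorm (fderiv ℝ φ) 4 (volume.restrict (slab h))
      ≤ eLpNorm (∑ i, fun x => |pd i φ x|) 4 (volume.restrict (slab h)) := by
        refine eLpNorm_mono_real fun x => ?_
        simpa using norm_fderiv_le_sum_abs_pd φ x
    _ ≤ ∑ i, eLpNorm (pd i φ) 4 (volume.restrict (slab h)) := by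
        refine (eLpNorm_sum_le (fun i _ => (hφ.pd i).memLp.norm.1) (by norm_num)).trans_eq ?_
        exact Finset.sum_congr rfl fun i _ => eLpNorm_norm (pd i φ)
    _ ≤ ∑ _i : Fin 3, ENNReal.ofReal (sobolevConst h * Hnorm h 2 φ) := by
        refine Finset.sum_le_sum fun i _ => (eLpNorm_four_le hh (hφ.pd i)).trans
          (ENNReal.ofReal_le_ofReal ?_)
        exact mul_le_mul_of_nonneg_left (Hnorm_pd_le h 1 φ i) (sobolevConst_pos hh).le
    _ = ENNReal.ofReal (3 * (sobolevConst h * Hnorm h 2 φ)) := by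
        rw [Finset.sum_const, Finset.card_fin, ← ENNReal.ofReal_nsmul, nsmul_eq_mul]
        norm_cast

lemma exists_box_add_subset_slab (hh : 0 < h) {x : R3} (hx : x ∈ slab h) :
    ∃ V : Set R3, MeasurableSet V ∧ StarConvex ℝ 0 V ∧ (∀ v ∈ V, ‖v‖ ≤ h / 3) ∧
      (∀ v ∈ V, x + v ∈ slab h) ∧ volume V = ENNReal.ofReal ((h / 3) ^ 3) := by
  obtain ⟨a, b, ha, hb, hab, hxab⟩ : ∃ a b : ℝ, a ≤ 0 ∧ 0 ≤ b ∧ b - a = h / 3 ∧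
      ∀ s ∈ Icc a b, x 2 + s ∈ Ioo 0 h := by
    obtain ⟨hx0, hxh⟩ : x 2 ∈ Ioo 0 h := hx
    rcases le_total (x 2) (h / 2) with hlow | hhigh
    · exact ⟨0, h / 3, le_rfl, by linarith, by ring,
        fun s hs => ⟨by linarith [hs.1], by linarith [hs.2]⟩⟩
    · exact ⟨-(h / 3), 0, by linarith, le_rfl, by ring,
        fun s hs => ⟨by linarith [hs.1], by linarith [hs.2]⟩⟩
  refine ⟨Icc (fun _ => a) fun _ => b, measurableSet_Icc,
    (convex_Icc _ _).starConvex ⟨fun _ => ha, fun _ => hb⟩, fun v hv => ?_,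
    fun v hv => hxab _ ⟨hv.1 2, hv.2 2⟩, ?_⟩
  · refine (pi_norm_le_iff_of_nonneg (by positivity)).2 fun i => abs_le.2 ⟨?_, ?_⟩
    · linarith [hv.1 i]
    · linarith [hv.2 i]
  · rw [Real.volume_Icc_pi, Finset.prod_const, Finset.card_fin, hab,
      ENNReal.ofReal_pow (by positivity)]

/-- The constant of the embedding `H² ⊂ L^∞`. -/
noncomputable def supConst (h : ℝ) : ℝ :=
  (1 + 4 * h) * sobolevConst h * ((h / 3) ^ 3) ^ (3 / 4 : ℝ) / (h / 3) ^ 3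

lemma supConst_pos (hh : 0 < h) : 0 < supConst h := by
  have := sobolevConst_pos hh
  unfold supConst
  positivity

lemma abs_le_Hnorm_two (hh : 0 < h) (hφ : DReg h φ) {x : R3} (hx : x ∈ slab h) :
    |φ x| ≤ supConst h * Hnorm h 2 φ := by
  obtain ⟨V, hV, hV0, hVnorm, hVslab, hvol⟩ := exists_box_add_subset_slab hh hx
  have hS := (sobolevConst_pos hh).le
  have hN := mul_nonneg hS (Hnorm_nonneg h 2 φ)
  have hφ4 : eLpNorm φ 4 (volume.restrict (slab h))
      ≤ ENNReal.ofReal (sobolevConst h * Hnorm h 2 φ) :=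
    (eLpNorm_four_le hh hφ).trans (ENNReal.ofReal_le_ofReal
      (mul_le_mul_of_nonneg_left (Hnorm_mono one_le_two φ) hS))
  have hinv : (1 - (Module.finrank ℝ R3 : ℝ) / (4 : ℝ≥0) : ℝ)⁻¹ = 4 := by norm_num
  have hexp : (1 - 1 / (4 : ℝ≥0) : ℝ) = 3 / 4 := by norm_num
  have morrey := measure_mul_enorm_le_of_starConvex (μ := volume) (p := 4) (hφ.1.of_le (by simp))
    (measurableSet_slab h) hV hV0 hVnorm hVslab (by norm_num) (by norm_num)
  rw [hvol, hinv, hexp] at morrey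
  have hbound : ENNReal.ofReal ((h / 3) ^ 3 * |φ x|) ≤
      ENNReal.ofReal ((sobolevConst h * Hnorm h 2 φ + h / 3 *
        (4 * (3 * (sobolevConst h * Hnorm h 2 φ)))) * ((h / 3) ^ 3) ^ (3 / 4 : ℝ)) := by
    rw [ENNReal.ofReal_mul (by positivity), ENNReal.ofReal_mul (by positivity),
      ENNReal.ofReal_add hN (by positivity), ENNReal.ofReal_mul (q := 4 * _) (by positivity),
      ENNReal.ofReal_mul (p := 4) (by positivity), ← ENNReal.ofReal_rpow_of_pos (by positivity),
      ← Real.enorm_eq_ofReal_abs]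
    refine morrey.trans ?_
    gcongr
    · exact hφ4
    · exact eLpNorm_four_fderiv_le hh hφ
  rw [ENNReal.ofReal_le_ofReal_iff (by positivity)] at hbound
  rw [supConst, div_mul_eq_mul_div, le_div_iff₀ (by positivity)]
  linarith

end SupBound

/-! ## Product estimates -/

section Products

variable {h : ℝ} {b f g : R3 → ℝ}

lemma Hnorm_one_mul_le (hb : Differentiable ℝ b) (hg : Differentiable ℝ g)
    (hpb : ∀ i, MemLp (fun x => pd i b x * g x) 2 (volume.restrict (slab h)))
    (hpg : ∀ i, MemLp (fun x => b x * pd i g x) 2 (volume.restrict (slab h))) :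
    Hnorm h 1 (fun x => b x * g x) ≤ Hnorm h 0 (fun x => b x * g x)
      + ∑ i, (Hnorm h 0 (fun x => pd i b x * g x) + Hnorm h 0 (fun x => b x * pd i g x)) := by
  refine (Hnorm_one_le_sum h _).trans (add_le_add le_rfl (Finset.sum_le_sum fun i _ => ?_))
  have leibniz : pd i (fun x => b x * g x) = fun x => pd i b x * g x + b x * pd i g x :=
    funext fun x => pd_mul (hb x) (hg x)
  rw [leibniz]
  exact Hnorm_zero_add_le (hpb i) (hpg i)

lemma Hnorm_one_mul_le_of_abs_le (hb : BReg h b) {M : ℝ} (hM : 0 ≤ M)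
    (hbM : ∀ x ∈ slab h, |b x| ≤ M) (hpbM : ∀ i, ∀ x ∈ slab h, |pd i b x| ≤ M) (hg : DReg h g) :
    Hnorm h 1 (fun x => b x * g x) ≤ 7 * M * Hnorm h 1 g := by
  calc Hnorm h 1 (fun x => b x * g x)
      ≤ Hnorm h 0 (fun x => b x * g x)
        + ∑ i, (Hnorm h 0 (fun x => pd i b x * g x) + Hnorm h 0 (fun x => b x * pd i g x)) :=
        Hnorm_one_mul_le (hb.1.differentiable (by simp)) hg.differentiable
          (fun i => (hb.pd i).memLp_mul hg.memLp) fun i => hb.memLp_mul (hg.pd i).memLp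
    _ ≤ M * Hnorm h 1 g + ∑ _i : Fin 3, (M * Hnorm h 1 g + M * Hnorm h 1 g) := by
        have hg01 := Hnorm_mono (h := h) zero_le_one g
        gcongr with i
        · exact (Hnorm_zero_mul_le hbM hg.memLp hM).trans (by gcongr)
        · exact (Hnorm_zero_mul_le (hpbM i) hg.memLp hM).trans (by gcongr)
        · exact (Hnorm_zero_mul_le hbM (hg.pd i).memLp hM).trans
            (by gcongr; exact Hnorm_pd_le h 0 g i)
    _ = 7 * M * Hnorm h 1 g := by
        rw [Finset.sum_const, Finset.card_fin]
        ring

lemma Hnorm_one_rbar_mul_le (hh : 0 < h) (hg : DReg h g) :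
    Hnorm h 1 (fun x => rbar x * g x) ≤ 7 * (h + 1) * Hnorm h 1 g := by
  refine Hnorm_one_mul_le_of_abs_le (bReg_rbar h) (by positivity) (fun x hx => ?_)
    (fun i x _ => ?_) hg
  · obtain ⟨hx0, hxh⟩ : x 2 ∈ Ioo 0 h := hx
    rw [rbar, abs_of_pos (by positivity)]
    linarith
  · have hpd : pd i rbar x = if (2 : Fin 3) = i then 1 else 0 := by
      refine (pd_add (by fun_prop) (by fun_prop)).trans ?_
      rw [pd_coord, pd_const, add_zero]
    rw [hpd]
    split_ifs <;> simp <;> linarith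

/-- The constant of the product estimate `‖fg‖₁ ≲ ‖f‖₂ ‖g‖₁`. -/
noncomputable def productConst (h : ℝ) : ℝ := 4 * supConst h + 3 * sobolevConst h ^ 2

lemma productConst_pos (hh : 0 < h) : 0 < productConst h := by
  have := supConst_pos hh
  unfold productConst
  positivity

lemma Hnorm_zero_mul_le_Hnorm_two (hh : 0 < h) (hf : DReg h f) (hg : DReg h g) :
    Hnorm h 0 (fun x => f x * g x) ≤ supConst h * Hnorm h 2 f * Hnorm h 0 g :=
  Hnorm_zero_mul_le (fun _ hx => abs_le_Hnorm_two hh hf hx) hg.memLp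
    (mul_nonneg (supConst_pos hh).le (Hnorm_nonneg _ _ _))

lemma Hnorm_one_mul_le_Hnorm_two (hh : 0 < h) (hf : DReg h f) (hg : DReg h g) :
    Hnorm h 1 (fun x => f x * g x) ≤ productConst h * (Hnorm h 2 f * Hnorm h 1 g) := by
  have hsup := mul_nonneg (supConst_pos hh).le (Hnorm_nonneg h 2 f)
  have hg1 := Hnorm_nonneg h 1 g
  calc Hnorm h 1 (fun x => f x * g x)
      ≤ Hnorm h 0 (fun x => f x * g x)
        + ∑ i, (Hnorm h 0 (fun x => pd i f x * g x) + Hnorm h 0 (fun x => f x * pd i g x)) :=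
        Hnorm_one_mul_le hf.differentiable hg.differentiable
          (fun i => ((hf.pd i).mul hh hg).memLp) fun i => (hf.mul hh (hg.pd i)).memLp
    _ ≤ supConst h * Hnorm h 2 f * Hnorm h 1 g
        + ∑ _i : Fin 3, (sobolevConst h ^ 2 * (Hnorm h 2 f * Hnorm h 1 g)
          + supConst h * Hnorm h 2 f * Hnorm h 1 g) := by
        gcongr with i
        · exact (Hnorm_zero_mul_le_Hnorm_two hh hf hg).trans
            (by gcongr; exact Hnorm_mono zero_le_one g)
        · exact (Hnorm_zero_mul_le_Hnorm_one hh (hf.pd i) hg).trans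
            (by gcongr; exact Hnorm_pd_le h 1 f i)
        · exact (Hnorm_zero_mul_le_Hnorm_two hh hf (hg.pd i)).trans
            (by gcongr; exact Hnorm_pd_le h 0 g i)
    _ = productConst h * (Hnorm h 2 f * Hnorm h 1 g) := by
        rw [Finset.sum_const, Finset.card_fin, productConst]
        ring

lemma rho_mul_eq (κ : ℝ) (s g : R3 → ℝ) :
    (fun x => rho κ s x * g x) = fun x => rbar x * g x + κ⁻¹ * (s x * g x) := by
  funext x
  rw [rho]
  ring

lemma DReg.rho_mul (hh : 0 < h) (κ : ℝ) (hf : DReg h f) (hg : DReg h g) :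
    DReg h fun x => rho κ f x * g x := by
  rw [rho_mul_eq]
  exact ((bReg_rbar h).mul_dReg hg).add ((bReg_const h κ⁻¹).mul_dReg (hf.mul hh hg))

lemma Hnorm_one_rho_mul_le (hh : 0 < h) {κ : ℝ} (hκ : 0 < κ) (hf : DReg h f) (hg : DReg h g) :
    Hnorm h 1 (fun x => rho κ f x * g x)
      ≤ (7 * (h + 1) + productConst h) * ((1 + κ⁻¹ * Hnorm h 2 f) * Hnorm h 1 g) := by
  have hκi := (inv_pos.2 hκ).le
  have hP := (productConst_pos hh).le
  have hf2 := Hnorm_nonneg h 2 f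
  have hg1 := Hnorm_nonneg h 1 g
  have hfg := hf.mul hh hg
  calc Hnorm h 1 (fun x => rho κ f x * g x)
      ≤ Hnorm h 1 (fun x => rbar x * g x) + Hnorm h 1 (fun x => κ⁻¹ * (f x * g x)) := by
        rw [rho_mul_eq]
        exact Hnorm_add_le ((bReg_rbar h).mul_dReg hg) ((bReg_const h κ⁻¹).mul_dReg hfg) 1
    _ ≤ 7 * (h + 1) * Hnorm h 1 g + κ⁻¹ * (productConst h * (Hnorm h 2 f * Hnorm h 1 g)) := by
        rw [Hnorm_const_mul hfg.1, abs_of_nonneg hκi]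
        gcongr
        · exact Hnorm_one_rbar_mul_le hh hg
        · exact Hnorm_one_mul_le_Hnorm_two hh hf hg
    _ ≤ (7 * (h + 1) + productConst h) * ((1 + κ⁻¹ * Hnorm h 2 f) * Hnorm h 1 g) := by
        have hfirst := mul_nonneg hP hg1
        have hsecond : 0 ≤ 7 * (h + 1) * (κ⁻¹ * Hnorm h 2 f * Hnorm h 1 g) := by positivity
        linarith

end Products

/-! ## The curl of the momentum equation -/

/-- The `k`-th component of the material acceleration `u_t + u·∇u`, with `V` in the role of the
time derivative `u_t`. -/
noncomputable def materialAccel (U V : R3 → Fin 3 → ℝ) (k : Fin 3) : R3 → ℝ :=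
  fun x => V x k + ∑ i, U x i * pd i (fun y => U y k) x

/-- The momentum equation `ρ(u_t + u·∇u) + ∇β = μΔu − Δσ(κe³ + ∇σ)` at a fixed time, for the
density perturbation `s`, the pressure `b`, the velocity `U` and its time derivative `V`. -/
def MomentumEq (h μ κ : ℝ) (s b : R3 → ℝ) (U V : R3 → Fin 3 → ℝ) : Prop :=
  ∀ x ∈ slab h, ∀ k, rho κ s x * materialAccel U V k x + pd k b x
    = μ * lap (fun y => U y k) x - lap s x * ((if k = 2 then κ else 0) + pd k s x)

/-- The norm `‖∇ΔU‖₀`. -/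
noncomputable def gradLapNorm (h : ℝ) (U : R3 → Fin 3 → ℝ) : ℝ :=
  √(∑ i, ∑ j, L2sq h (pd i (lap fun y => U y j)))

section MomentumEquation

variable {h μ κ : ℝ} {s b : R3 → ℝ} {U V : R3 → Fin 3 → ℝ}

lemma Hnorm_le_VHnorm (h : ℝ) (n : ℕ) (U : R3 → Fin 3 → ℝ) (k : Fin 3) :
    Hnorm h n (fun x => U x k) ≤ VHnorm h n U :=
  Real.sqrt_le_sqrt <| Finset.single_le_sum (f := fun k => HSq h n fun x => U x k)
    (fun _ _ => HSq_nonneg _ _ _) (Finset.mem_univ k)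

lemma le_sum_sum {ι κ : Type*} [Fintype ι] [Fintype κ] {a : ι → κ → ℝ} (ha : ∀ i k, 0 ≤ a i k)
    (i : ι) (k : κ) : a i k ≤ ∑ i, ∑ k, a i k :=
  (Finset.single_le_sum (fun k _ => ha i k) (Finset.mem_univ k)).trans <|
    Finset.single_le_sum (f := fun i => ∑ k, a i k)
      (fun i _ => Finset.sum_nonneg fun k _ => ha i k) (Finset.mem_univ i)

lemma Hnorm_pd_le_GradNorm (h : ℝ) (n : ℕ) (U : R3 → Fin 3 → ℝ) (i k : Fin 3) :
    Hnorm h n (pd i fun x => U x k) ≤ GradNorm h n U :=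
  Real.sqrt_le_sqrt <| le_sum_sum (a := fun i k => HSq h n (pd i fun x => U x k))
    (fun _ _ => HSq_nonneg _ _ _) i k

lemma Hnorm_zero_pd_lap_le_gradLapNorm (h : ℝ) (U : R3 → Fin 3 → ℝ) (i k : Fin 3) :
    Hnorm h 0 (pd i (lap fun x => U x k)) ≤ gradLapNorm h U := by
  rw [Hnorm, HSq_zero]
  exact Real.sqrt_le_sqrt <| le_sum_sum (a := fun i k => L2sq h (pd i (lap fun x => U x k)))
    (fun _ _ => L2sq_nonneg _ _) i k

lemma dReg_materialAccel (hh : 0 < h) (hU : ∀ k, DReg h fun x => U x k)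
    (hV : ∀ k, DReg h fun x => V x k) (k : Fin 3) : DReg h (materialAccel U V k) :=
  (hV k).add <| DReg.sum Finset.univ_nonempty fun i _ => (hU i).mul hh ((hU k).pd i)

lemma Hnorm_one_materialAccel_le (hh : 0 < h) (hU : ∀ k, DReg h fun x => U x k)
    (hV : ∀ k, DReg h fun x => V x k) (k : Fin 3) :
    Hnorm h 1 (materialAccel U V k)
      ≤ (1 + 3 * productConst h) * (VHnorm h 1 V + VHnorm h 2 U * GradNorm h 1 U) := by
  have hP := (productConst_pos hh).le
  have hadvection (i : Fin 3) := (hU i).mul hh ((hU k).pd i)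
  have hV0 : 0 ≤ VHnorm h 1 V := Real.sqrt_nonneg _
  have hU0 : 0 ≤ VHnorm h 2 U * GradNorm h 1 U := by unfold VHnorm GradNorm; positivity
  calc Hnorm h 1 (materialAccel U V k)
      ≤ Hnorm h 1 (fun x => V x k)
        + ∑ i, Hnorm h 1 (fun x => U x i * pd i (fun y => U y k) x) :=
        (Hnorm_add_le (hV k) (DReg.sum Finset.univ_nonempty fun i _ => hadvection i) 1).trans
          (add_le_add le_rfl (Hnorm_sum_le Finset.univ_nonempty (fun i _ => hadvection i) 1))
    _ ≤ VHnorm h 1 V + ∑ _i : Fin 3, productConst h * (VHnorm h 2 U * GradNorm h 1 U) := by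
        gcongr with i
        · exact Hnorm_le_VHnorm h 1 V k
        · refine (Hnorm_one_mul_le_Hnorm_two hh (hU i) ((hU k).pd i)).trans ?_
          gcongr
          · exact Hnorm_nonneg _ _ _
          · exact Real.sqrt_nonneg _
          · exact Hnorm_le_VHnorm h 2 U i
          · exact Hnorm_pd_le_GradNorm h 1 U i k
    _ ≤ (1 + 3 * productConst h) * (VHnorm h 1 V + VHnorm h 2 U * GradNorm h 1 U) := by
        rw [Finset.sum_const, Finset.card_fin, nsmul_eq_mul]
        push_cast
        linarith [mul_nonneg hP hV0]

lemma MomentumEq.pd_pd_pressure (hh : 0 < h) (hm : MomentumEq h μ κ s b U V) (hs : DReg h s)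
    (hU : ∀ k, DReg h fun x => U x k) (hV : ∀ k, DReg h fun x => V x k) (i k : Fin 3)
    {x : R3} (hx : x ∈ slab h) :
    pd i (pd k b) x = μ * pd i (lap fun y => U y k) x
      - (pd i (lap s) x * ((if k = 2 then κ else 0) + pd k s x) + lap s x * pd i (pd k s) x)
      - pd i (fun y => rho κ s y * materialAccel U V k y) x := by
  set c : ℝ := if k = 2 then κ else 0
  have hlapU := (hU k).lap.differentiable x
  have hlap := hs.lap.differentiable x
  have hforce := ((hs.pd k).differentiable x).const_add c
  have hviscous : DifferentiableAt ℝ (fun y => μ * lap (fun z => U z k) y) x := hlapU.const_mul μ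
  have hcapillary : DifferentiableAt ℝ (fun y => lap s y * (c + pd k s y)) x := hlap.mul hforce
  have hinertia := (hs.rho_mul hh κ (dReg_materialAccel hh hU hV k)).differentiable x
  have hpressure : pd k b =ᶠ[𝓝 x] fun y =>
      μ * lap (fun z => U z k) y - lap s y * (c + pd k s y) - rho κ s y * materialAccel U V k y :=
    eventually_of_mem ((isOpen_Ioo.preimage (continuous_apply 2)).mem_nhds hx) fun y hy => by
      linarith [hm y hy k]
  rw [pd, hpressure.fderiv_eq, ← pd, pd_sub (hviscous.fun_sub hcapillary) hinertia,
    pd_sub hviscous hcapillary, pd_const_mul hlapU, pd_mul hlap hforce,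
    pd_add (differentiableAt_const c) ((hs.pd k).differentiable x), pd_const, zero_add]

lemma MomentumEq.curl (hh : 0 < h) (hm : MomentumEq h μ κ s b U V) (hs : DReg h s)
    (hb : ContDiff ℝ 2 b) (hU : ∀ k, DReg h fun x => U x k) (hV : ∀ k, DReg h fun x => V x k)
    {j : Fin 3} (hj : j ≠ 2) {x : R3} (hx : x ∈ slab h) :
    κ * pd j (lap s) x
      = μ * (pd j (lap fun y => U y 2) x - pd 2 (lap fun y => U y j) x)
        + (pd j s x * pd 2 (lap s) x - pd 2 s x * pd j (lap s) x)
        + (pd 2 (fun y => rho κ s y * materialAccel U V j y) x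
          - pd j (fun y => rho κ s y * materialAccel U V 2 y) x) := by
  have hj2 := hm.pd_pd_pressure hh hs hU hV j 2 hx
  have h2j := hm.pd_pd_pressure hh hs hU hV 2 j hx
  rw [pd_comm hb, hs.pd_comm, if_pos rfl] at hj2
  rw [if_neg hj] at h2j
  linarith

lemma Hnorm_zero_curl_capillary_le (hh : 0 < h) (hs : DReg h s) (i j : Fin 3) :
    Hnorm h 0 (fun x => pd j s x * pd i (lap s) x - pd i s x * pd j (lap s) x)
      ≤ 6 * supConst h * (Hnorm h 2 (pd j s) * Hnorm h 3 s) := by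
  have hsup := (supConst_pos hh).le
  have hs3 := Hnorm_nonneg h 3 s
  have hsj := Hnorm_nonneg h 2 (pd j s)
  have hlapi : Hnorm h 0 (pd i (lap s)) ≤ 3 * Hnorm h 3 s :=
    (Hnorm_pd_le h 0 _ i).trans (Hnorm_lap_le hs 1)
  have hlapj : Hnorm h 0 (pd j (lap s)) ≤ 3 * Hnorm h 2 (pd j s) := by
    rw [pd_lap hs.1]
    exact Hnorm_lap_le (hs.pd j) 0
  calc Hnorm h 0 (fun x => pd j s x * pd i (lap s) x - pd i s x * pd j (lap s) x)
      ≤ Hnorm h 0 (fun x => pd j s x * pd i (lap s) x)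
        + Hnorm h 0 (fun x => pd i s x * pd j (lap s) x) :=
        Hnorm_zero_sub_le ((hs.pd j).mul hh (hs.lap.pd i)).memLp
          ((hs.pd i).mul hh (hs.lap.pd j)).memLp
    _ ≤ supConst h * Hnorm h 2 (pd j s) * (3 * Hnorm h 3 s)
        + supConst h * Hnorm h 3 s * (3 * Hnorm h 2 (pd j s)) := by
        gcongr
        · exact (Hnorm_zero_mul_le_Hnorm_two hh (hs.pd j) (hs.lap.pd i)).trans (by gcongr)
        · refine (Hnorm_zero_mul_le_Hnorm_two hh (hs.pd i) (hs.lap.pd j)).trans ?_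
          gcongr
          · exact Hnorm_nonneg _ _ _
          · exact Hnorm_pd_le h 2 s i
    _ = 6 * supConst h * (Hnorm h 2 (pd j s) * Hnorm h 3 s) := by ring

lemma Hnorm_zero_curl_lap_le (hU : ∀ k, DReg h fun x => U x k) (i j : Fin 3) :
    Hnorm h 0 (fun x => pd j (lap fun y => U y i) x - pd i (lap fun y => U y j) x)
      ≤ 2 * gradLapNorm h U := by
  refine (Hnorm_zero_sub_le ((hU i).lap.pd j).memLp ((hU j).lap.pd i).memLp).trans ?_
  linarith [Hnorm_zero_pd_lap_le_gradLapNorm h U j i, Hnorm_zero_pd_lap_le_gradLapNorm h U i j]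

lemma Hnorm_zero_curl_le {f g : R3 → ℝ} (hf : DReg h f) (hg : DReg h g) (i j : Fin 3) :
    Hnorm h 0 (fun x => pd i f x - pd j g x) ≤ Hnorm h 1 f + Hnorm h 1 g :=
  (Hnorm_zero_sub_le (hf.pd i).memLp (hg.pd j).memLp).trans
    (add_le_add (Hnorm_pd_le h 0 f i) (Hnorm_pd_le h 0 g j))

lemma MomentumEq.mul_Hnorm_zero_lap_pd_le (hh : 0 < h) (hκ : 0 < κ)
    (hm : MomentumEq h μ κ s b U V) (hs : DReg h s) (hb : ContDiff ℝ 2 b)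
    (hU : ∀ k, DReg h fun x => U x k) (hV : ∀ k, DReg h fun x => V x k) {j : Fin 3} (hj : j ≠ 2) :
    κ * Hnorm h 0 (lap (pd j s))
      ≤ |μ| * (2 * gradLapNorm h U) + 6 * supConst h * (Hnorm h 2 (pd j s) * Hnorm h 3 s)
        + (Hnorm h 1 (fun x => rho κ s x * materialAccel U V j x)
          + Hnorm h 1 fun x => rho κ s x * materialAccel U V 2 x) := by
  have hinertia (k : Fin 3) := hs.rho_mul hh κ (dReg_materialAccel hh hU hV k)
  have hviscous := (((hU 2).lap.pd j).memLp.sub ((hU j).lap.pd 2).memLp).const_mul μ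
  have hcapillary := ((hs.pd j).mul hh (hs.lap.pd 2)).memLp.sub
    ((hs.pd 2).mul hh (hs.lap.pd j)).memLp
  rw [← pd_lap hs.1]
  calc κ * Hnorm h 0 (pd j (lap s))
      = Hnorm h 0 (fun x => κ * pd j (lap s) x) := by
        rw [Hnorm_zero_const_mul, abs_of_pos hκ]
    _ = _ := Hnorm_zero_congr fun x hx => hm.curl hh hs hb hU hV hj hx
    _ ≤ _ := (Hnorm_zero_add_le (hviscous.add hcapillary)
        (((hinertia j).pd 2).memLp.sub ((hinertia 2).pd j).memLp)).trans
          (add_le_add_left (Hnorm_zero_add_le hviscous hcapillary) _)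
    _ ≤ _ := by
        rw [Hnorm_zero_const_mul]
        gcongr
        · exact Hnorm_zero_curl_lap_le hU 2 j
        · exact Hnorm_zero_curl_capillary_le hh hs 2 j
        · exact Hnorm_zero_curl_le (hinertia j) (hinertia 2) 2 j

end MomentumEquation

/-! ## The dissipation estimate -/

section Dissipation

variable {h μ κ : ℝ} {s b : R3 → ℝ} {U V : R3 → Fin 3 → ℝ}

/-- The constant of the estimate of the inertial force `‖ρ(u_t + u·∇u)‖₁`. -/
noncomputable def inertiaConst (h : ℝ) : ℝ :=
  (7 * (h + 1) + productConst h) * (1 + 3 * productConst h)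

lemma inertiaConst_pos (hh : 0 < h) : 0 < inertiaConst h := by
  have := productConst_pos hh
  unfold inertiaConst
  positivity

lemma Hnorm_one_rho_mul_materialAccel_le (hh : 0 < h) (hκ : 0 < κ) (hs : DReg h s)
    (hU : ∀ k, DReg h fun x => U x k) (hV : ∀ k, DReg h fun x => V x k) (k : Fin 3) :
    Hnorm h 1 (fun x => rho κ s x * materialAccel U V k x)
      ≤ inertiaConst h * ((1 + κ⁻¹ * Hnorm h 2 s)
        * (VHnorm h 1 V + VHnorm h 2 U * GradNorm h 1 U)) := by
  have hP := productConst_pos hh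
  have hs2 := Hnorm_nonneg h 2 s
  refine (Hnorm_one_rho_mul_le hh hκ hs (dReg_materialAccel hh hU hV k)).trans ?_
  rw [inertiaConst, mul_assoc, mul_left_comm (1 + 3 * productConst h)]
  gcongr
  exact Hnorm_one_materialAccel_le hh hU hV k

/-- The constant of the estimate of a single horizontal derivative `‖∂ⱼσ‖₂`. -/
noncomputable def dissipationConst (h μ : ℝ) : ℝ :=
  (4 * h ^ 2 + 2 * h + 1) * (2 * |μ| + 6 * supConst h + 2 * inertiaConst h)

lemma dissipationConst_pos (hh : 0 < h) (μ : ℝ) : 0 < dissipationConst h μ := by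
  have := supConst_pos hh
  have := inertiaConst_pos hh
  unfold dissipationConst
  positivity

lemma MomentumEq.Hnorm_two_pd_le (hh : 0 < h) (hκ : 0 < κ) (hm : MomentumEq h μ κ s b U V)
    (hs : DReg h s) (hb : ContDiff ℝ 2 b) (hU : ∀ k, DReg h fun x => U x k)
    (hV : ∀ k, DReg h fun x => V x k) (hbdry : ∀ x ∈ bdry h, s x = 0) {j : Fin 3} (hj : j ≠ 2) :
    Hnorm h 2 (pd j s) ≤ dissipationConst h μ
      * (κ⁻¹ * (gradLapNorm h U + Hnorm h 2 (pd j s) * Hnorm h 3 s)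
        + (κ⁻¹ + κ⁻¹ ^ 2 * Hnorm h 2 s) * (VHnorm h 1 V + VHnorm h 2 U * GradNorm h 1 U)) := by
  set L := gradLapNorm h U
  set Q := Hnorm h 2 (pd j s) * Hnorm h 3 s
  set N := VHnorm h 1 V + VHnorm h 2 U * GradNorm h 1 U
  set R := (1 + κ⁻¹ * Hnorm h 2 s) * N
  set c := 2 * |μ| + 6 * supConst h + 2 * inertiaConst h with hc
  have hL : 0 ≤ L := Real.sqrt_nonneg _
  have hQ : 0 ≤ Q := mul_nonneg (Hnorm_nonneg _ _ _) (Hnorm_nonneg _ _ _)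
  have hN : 0 ≤ N := add_nonneg (Real.sqrt_nonneg _)
    (mul_nonneg (Real.sqrt_nonneg _) (Real.sqrt_nonneg _))
  have hR : 0 ≤ R := mul_nonneg (by have := Hnorm_nonneg h 2 s; positivity) hN
  have hlap : κ * Hnorm h 0 (lap (pd j s)) ≤ c * (L + Q + R) := by
    have hcurl := hm.mul_Hnorm_zero_lap_pd_le hh hκ hs hb hU hV hj
    have hinertia := Hnorm_one_rho_mul_materialAccel_le hh hκ hs hU hV
    have hS := (supConst_pos hh).le
    have hI := (inertiaConst_pos hh).le
    calc κ * Hnorm h 0 (lap (pd j s))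
        ≤ |μ| * (2 * L) + 6 * supConst h * Q + 2 * (inertiaConst h * R) := by
          linarith [hinertia j, hinertia 2]
      _ ≤ c * (L + Q + R) := by
          have : 0 ≤ |μ| * (Q + R) := by positivity
          have : 0 ≤ supConst h * (L + R) := by positivity
          have : 0 ≤ inertiaConst h * (L + Q) := by positivity
          linarith
  calc Hnorm h 2 (pd j s) ≤ (4 * h ^ 2 + 2 * h + 1) * Hnorm h 0 (lap (pd j s)) :=
        Hnorm_two_le_Hnorm_zero_lap hh (hs.pd j) fun x hx =>
          pd_eq_zero_of_mem_bdry hs.differentiable hbdry hj hx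
    _ ≤ (4 * h ^ 2 + 2 * h + 1) * (κ⁻¹ * (c * (L + Q + R))) := by
        gcongr
        exact (le_inv_mul_iff₀ hκ).2 hlap
    _ = dissipationConst h μ * (κ⁻¹ * (L + Q) + (κ⁻¹ + κ⁻¹ ^ 2 * Hnorm h 2 s) * N) := by
        rw [dissipationConst, ← hc]
        ring

lemma anisoNorm_one (h : ℝ) (k : ℕ) (f : R3 → ℝ) :
    anisoNorm h 1 k f = Hnorm h k (pd 1 f) + Hnorm h k (pd 0 f) := by
  simp [anisoNorm, Finset.sum_range_succ, pdIter]

lemma MomentumEq.anisoNorm_le (hh : 0 < h) (hκ : 0 < κ) (hm : MomentumEq h μ κ s b U V)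
    (hs : DReg h s) (hb : ContDiff ℝ 2 b) (hU : ∀ k, DReg h fun x => U x k)
    (hV : ∀ k, DReg h fun x => V x k) (hbdry : ∀ x ∈ bdry h, s x = 0) :
    anisoNorm h 1 2 s ≤ 2 * dissipationConst h μ
      * (κ⁻¹ * (gradLapNorm h U + anisoNorm h 1 2 s * Hnorm h 3 s)
        + (κ⁻¹ + κ⁻¹ ^ 2 * Hnorm h 2 s) * (VHnorm h 1 V + VHnorm h 2 U * GradNorm h 1 U)) := by
  have hpd {j : Fin 3} (hj : j ≠ 2) := hm.Hnorm_two_pd_le hh hκ hs hb hU hV hbdry hj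
  have hquad : 0 ≤ dissipationConst h μ * (κ⁻¹ * (anisoNorm h 1 2 s * Hnorm h 3 s)) := by
    have := (dissipationConst_pos hh μ).le
    rw [anisoNorm_one]
    have := Hnorm_nonneg h 2 (pd 0 s)
    have := Hnorm_nonneg h 2 (pd 1 s)
    have := Hnorm_nonneg h 3 s
    positivity
  rw [anisoNorm_one] at hquad ⊢
  linarith [hpd (j := 0) (by decide), hpd (j := 1) (by decide)]

end Dissipation

theorem horizontal_dissipation_estimate_general (h μ : ℝ) (hh : 0 < h) :
    ∃ C : ℝ, 0 < C ∧
      ∀ (κ t : ℝ), 0 < κ →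
      ∀ (σ : ℝ → R3 → ℝ) (u : ℝ → R3 → Fin 3 → ℝ) (β : ℝ → R3 → ℝ),
        DReg h (σ t) → (∀ k, DReg h (uc u k t)) → (∀ k, DReg h (dt (uc u k) t)) →
        ContDiff ℝ 2 (β t) →
        MomentumEq h μ κ (σ t) (β t) (u t) (fun x k => dt (uc u k) t x) →
        (∀ x ∈ bdry h, σ t x = 0) →
          anisoNorm h 1 2 (σ t)
            ≤ C * (κ⁻¹ * (gradLapNorm h (u t) + anisoNorm h 1 2 (σ t) * Hnorm h 3 (σ t))
                + (κ⁻¹ + κ⁻¹ ^ 2 * Hnorm h 2 (σ t))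
                    * (utNorm h 1 u t + VHnorm h 2 (u t) * GradNorm h 1 (u t))) :=
  ⟨2 * dissipationConst h μ, mul_pos two_pos (dissipationConst_pos hh μ),
    fun _ _ hκ _ _ _ hσ hu hut hβ hm hbdry => hm.anisoNorm_le hh hκ hσ hβ hu hut hbdry⟩

/-- dissipation estimate for horizontal derivatives of σ,
    Lemma 2.4, (2.43). -/
theorem horizontal_dissipation_estimate (hh μ d : ℝ)
    (hhh : 0 < hh) (hμ : 0 < μ) (hd : 0 < d) :
    ∃ C : ℝ, 0 < C ∧
      ∀ (κ T : ℝ), 0 < κ → 0 < T →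
      ∀ (σ : ℝ → R3 → ℝ) (u : ℝ → R3 → Fin 3 → ℝ) (β : ℝ → R3 → ℝ),
        SReg hh σ → VReg hh u → SReg hh β →
        (∀ t ∈ Set.Ioo (0:ℝ) T, NSK hh μ κ σ u β t) →
        (∀ t ∈ Set.Ioo (0:ℝ) T, NavierBC hh u t) →
        (∀ t ∈ Set.Ioo (0:ℝ) T, ∀ x ∈ bdry hh,
          σ t x = 0 ∧ pd 2 (pd 2 (σ t)) x = 0) →
        ∀ t ∈ Set.Ioo (0:ℝ) T,
          anisoNorm hh 1 2 (σ t)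
            ≤ C * (κ⁻¹ * (Real.sqrt (∑ i : Fin 3, ∑ j : Fin 3,
                    L2sq hh (pd i (lap (fun y => u t y j))))
                  + anisoNorm hh 1 2 (σ t) * Hnorm hh 3 (σ t))
                + (κ⁻¹ + (κ⁻¹) ^ 2 * Hnorm hh 2 (σ t))
                    * (utNorm hh 1 u t + VHnorm hh 2 (u t) * GradNorm hh 1 (u t))) := by
  obtain ⟨C, hC, hbound⟩ := horizontal_dissipation_estimate_general hh μ hhh
  exact ⟨C, hC, fun κ T hκ _ σ u β hσ hu hβ hNSK _ hbdry t ht =>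
    hbound κ t hκ σ u β (hσ.dReg t) (fun k => (hu k).dReg t) (fun k => (hu k).dReg_dt t)
      ((hβ.dReg t).1.of_le (WithTop.coe_le_coe.2 le_top)) (fun x hx => (hNSK t ht x hx).2.1)
      fun x hx => (hbdry t ht x hx).1⟩
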